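/- arXiv:2507.10728 — 2 statements merged into one kernel-verified Lean document; each statement's English description precedes it below -/
import Mathlib

section
/- Let u be a weak solution of −div(A∇u) = u in Ω. For every δ ∈ (0,1) there exists R₁ = R₁(u, n, α, δ) > 1 such that the function ρ ↦ G(ρ)/ρ^{n−1−δ} is non-decreasing on the interval [R₁, ∞). -/
open MeasureTheory Metric Filter

noncomputable section

abbrev En (n : ℕ) := EuclideanSpace ℝ (Fin n)

/-- The exterior domain `Ω = {x ∈ ℝⁿ : |x| > 1}`. -/
def OmegaExt (n : ℕ) : Set (En n) := {x | 1 < ‖x‖}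

/-- The quadratic/bilinear form `⟨M ξ, η⟩`. -/
def quadForm {n : ℕ} (M : Matrix (Fin n) (Fin n) ℝ) (ξ η : En n) : ℝ :=
  ∑ i, M.mulVec (fun j => ξ j) i * η i

/-- The conformal factor `μ(x) = ⟨A(x)∇r, ∇r⟩ = ⟨A(x)x, x⟩ / |x|²`. -/
def muA {n : ℕ} (A : En n → Matrix (Fin n) (Fin n) ℝ) (x : En n) : ℝ :=
  quadForm (A x) x x / ‖x‖ ^ 2

/-- The vector field `Z(x) = r(x) A(x)∇r(x) / μ(x) = A(x)x / μ(x)`. -/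
def Zvec {n : ℕ} (A : En n → Matrix (Fin n) (Fin n) ℝ) (x : En n) : En n :=
  (muA A x)⁻¹ • (WithLp.toLp 2 ((A x).mulVec (fun j => x j)) : En n)

/-- The derivative of `f` along `Z`: `Zf = ⟨Z, ∇f⟩`. -/
def Zd {n : ℕ} (A : En n → Matrix (Fin n) (Fin n) ℝ) (f : En n → ℝ) (x : En n) : ℝ :=
  ∑ i, Zvec A x i * gradient f x i

/-- Surface integral over the sphere `{|x| = ρ}` w.r.t. the `(n-1)`-dimensional
Hausdorff measure. -/
def sphInt (n : ℕ) (ρ : ℝ) (f : En n → ℝ) : ℝ :=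
  ∫ x in sphere (0 : En n) ρ, f x ∂(μH[(n : ℝ) - 1])

/-- Structural hypotheses on `A`: symmetry, `C¹` entries on `Ω`, uniform ellipticity
`λ|ξ|² ≤ ⟨A(x)ξ,ξ⟩ ≤ λ⁻¹|ξ|²`, and the decay `|x||∇B(x)| + |B(x)| ≤ C|x|^{-α}`
where `B = A - Iₙ` (entrywise). -/
def EllipticDecay {n : ℕ} (A : En n → Matrix (Fin n) (Fin n) ℝ) (lam α C : ℝ) : Prop :=
  (∀ x ∈ OmegaExt n, (A x).IsSymm) ∧
  (∀ i j, ContDiffOn ℝ 1 (fun x => A x i j) (OmegaExt n)) ∧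
  (∀ x ∈ OmegaExt n, ∀ ξ : En n,
      lam * ‖ξ‖ ^ 2 ≤ quadForm (A x) ξ ξ ∧ quadForm (A x) ξ ξ ≤ lam⁻¹ * ‖ξ‖ ^ 2) ∧
  (∀ x ∈ OmegaExt n, ∀ i j,
      ‖x‖ * ‖gradient (fun y => (A y - 1) i j) x‖ + |(A x - 1) i j| ≤ C * ‖x‖ ^ (-α))

/-- `u ∈ C¹(Ω)` is a weak solution of `-div(A∇u) = u` in `Ω`, i.e.
`∫_Ω ⟨A∇u, ∇φ⟩ = ∫_Ω u φ` for every test function `φ ∈ C_c^∞(Ω)`. -/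
def WeakSol {n : ℕ} (A : En n → Matrix (Fin n) (Fin n) ℝ) (u : En n → ℝ) : Prop :=
  ContDiffOn ℝ 1 u (OmegaExt n) ∧
  ∀ φ : En n → ℝ, ContDiff ℝ (⊤ : ℕ∞) φ → HasCompactSupport φ → tsupport φ ⊆ OmegaExt n →
    (∫ x in OmegaExt n, ∑ i, (A x).mulVec (fun j => gradient u x j) i * gradient φ x i) =
    ∫ x in OmegaExt n, u x * φ x

/-- The functional `G(ρ)` associated with a solution `u`, where `w = r^{(n-1)/2} u`. -/
def Gfun {n : ℕ} (A : En n → Matrix (Fin n) (Fin n) ℝ) (u : En n → ℝ) (ρ : ℝ) : ℝ :=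
  let w : En n → ℝ := fun x => ‖x‖ ^ (((n : ℝ) - 1) / 2) * u x
  2 * sphInt n ρ (fun x => (Zd A w x / ‖x‖) ^ 2 * muA A x)
    - sphInt n ρ (fun x => quadForm (A x) (gradient w x) (gradient w x))
    + sphInt n ρ (fun x => (w x) ^ 2)
    - ((n : ℝ) - 1) * ((n : ℝ) - 3) / 4 * sphInt n ρ (fun x => (w x) ^ 2 / ‖x‖ ^ 2 * muA A x)

/-!
With `c = (n - 1) * (n - 3) / 4`, `Z = r a ∇r / μ` and `S = a ∇(log r)`, the quantity `ρ * G(ρ)` is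
the flux through `{‖x‖ = ρ}` of the field
`W = 2 (Zw) a∇w - ⟪a∇w, ∇w⟫ Z + w² Z - c w² S`, and `G(ρ) = ∫ g` over that sphere. If `v` is `C²`,
`w = r ^ ((n - 1) / 2) v` and `div (a∇v) + v = h`, then `div W - (n - δ) g` is a quadratic form in
`(∇w, w)` plus `2 (Zw) r ^ ((n - 1) / 2) h`. Near infinity that form is a small perturbation of
`(2 - δ) (|∇w|² - (∂w/∂r)²) + δ (∂w/∂r)² + δ w²`, its value for `a = 1` up to `O(r⁻¹)`, hence
positive definite, and `ρ ^ (1 + δ - n) * G(ρ)` is nondecreasing up to an error of order `sup |h|²`.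

A weak solution is only `C¹`, so the above is applied to its mollifications: by Friedrichs'
commutator lemma `h` tends to `0` uniformly on compact sets, and `G` converges.
-/

open scoped RealInnerProductSpace Topology

section SphereMeasure

open Module

variable {E : Type*} [NormedAddCommGroup E] [InnerProductSpace ℝ E]
  [MeasurableSpace E] [BorelSpace E]

variable (E) in
/-- Surface measure on the unit sphere, as a measure on the ambient space. -/
def sphereMeasure : Measure E :=
  (μH[(finrank ℝ E : ℝ) - 1]).restrict (sphere 0 1)

lemma ae_sphereMeasure_norm_eq_one : ∀ᵐ ω ∂sphereMeasure E, ‖ω‖ = 1 := by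
  filter_upwards [ae_restrict_mem isClosed_sphere.measurableSet] with ω hω
  exact mem_sphere_zero_iff_norm.1 hω

open scoped Pointwise in
lemma map_smul_hausdorffMeasure {d ρ : ℝ} (hd : 0 ≤ d) (hρ : 0 < ρ) :
    (μH[d] : Measure E).map (ρ • ·) = ENNReal.ofReal ((ρ ^ d)⁻¹) • μH[d] := by
  ext s hs
  rw [Measure.map_apply (measurable_const_smul ρ) hs, Measure.smul_apply,
    Set.preimage_smul₀ hρ.ne', Measure.hausdorffMeasure_smul₀ hd (inv_ne_zero hρ.ne'),
    ENNReal.smul_def, smul_eq_mul, smul_eq_mul]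
  congr 1
  rw [← Real.inv_rpow hρ.le, ← ENNReal.ofReal_coe_nnreal, NNReal.coe_rpow, coe_nnnorm,
    Real.norm_of_nonneg (inv_nonneg.2 hρ.le)]

lemma integral_comp_linearIsometryEquiv_sphereMeasure (T : E ≃ₗᵢ[ℝ] E) (f : E → ℝ) :
    ∫ ω, f (T ω) ∂sphereMeasure E = ∫ ω, f ω ∂sphereMeasure E := by
  have h := (T.toIsometryEquiv.measurePreserving_hausdorffMeasure
    ((finrank ℝ E : ℝ) - 1)).setIntegral_preimage_emb
    T.toIsometryEquiv.toHomeomorph.measurableEmbedding f (sphere 0 1)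
  have hpre : T.toIsometryEquiv ⁻¹' sphere (0 : E) 1 = sphere 0 1 := by
    ext x
    simp
  rwa [hpre] at h

variable [FiniteDimensional ℝ E]

lemma hausdorffMeasure_hemisphere_lt_top {v : E} (hv : ‖v‖ = 1) :
    μH[(finrank ℝ E : ℝ) - 1] {x : E | ‖x‖ = 1 ∧ ⟪v, x⟫ ≤ 0} < ⊤ := by
  let f : (ℝ ∙ v)ᗮ → E := fun w => stereoInvFunAux v w
  have hfin : ((finrank ℝ (ℝ ∙ v)ᗮ : ℕ) : ℝ) = (finrank ℝ E : ℝ) - 1 := by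
    have h := (ℝ ∙ v).finrank_add_finrank_orthogonal
    rw [finrank_span_singleton (norm_ne_zero_iff.1 (by simp [hv]))] at h
    rw [← h]
    push_cast
    ring
  have hsub : {x : E | ‖x‖ = 1 ∧ ⟪v, x⟫ ≤ 0} ⊆ f '' closedBall 0 2 := by
    rintro x ⟨hx, hvx⟩
    have hne : x ≠ v := by
      rintro rfl
      rw [real_inner_self_eq_norm_sq, hx] at hvx
      norm_num at hvx
    refine ⟨stereoToFun v x, ?_, congrArg Subtype.val
      (stereo_left_inv hv (x := ⟨x, mem_sphere_zero_iff_norm.2 hx⟩) hne)⟩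
    have hfactor : 2 / (1 - ⟪v, x⟫) ≤ 2 := div_le_self two_pos.le (by linarith)
    have hproj := (ℝ ∙ v)ᗮ.norm_orthogonalProjectionOnto_apply_le x
    rw [mem_closedBall_zero_iff, stereoToFun_apply, norm_smul, innerSL_apply_apply,
      Real.norm_of_nonneg (div_nonneg two_pos.le (by linarith))]
    nlinarith [norm_nonneg ((ℝ ∙ v)ᗮ.orthogonalProjectionOnto x)]
  have hf : ContDiff ℝ 1 f := contDiff_stereoInvFunAux.comp (ℝ ∙ v)ᗮ.subtypeL.contDiff
  obtain ⟨K, hK⟩ := (hf.locallyLipschitz.locallyLipschitzOn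
    (s := closedBall 0 2)).exists_lipschitzOnWith_of_compact (isCompact_closedBall 0 2)
  refine (measure_mono hsub).trans_lt ?_
  rw [← hfin]
  refine (hK.hausdorffMeasure_image_le (Nat.cast_nonneg _)).trans_lt (ENNReal.mul_lt_top
    (ENNReal.rpow_lt_top_of_nonneg (Nat.cast_nonneg _) ENNReal.coe_ne_top) ?_)
  have := isAddHaarMeasure_hausdorffMeasure (E := (ℝ ∙ v)ᗮ)
  exact (isCompact_closedBall _ _).measure_lt_top

instance isFiniteMeasure_sphereMeasure [Nontrivial E] : IsFiniteMeasure (sphereMeasure E) := by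
  obtain ⟨v, hv⟩ := exists_norm_eq E zero_le_one
  refine ⟨?_⟩
  rw [sphereMeasure, Measure.restrict_apply_univ]
  have hcover : sphere (0 : E) 1 ⊆
      {x | ‖x‖ = 1 ∧ ⟪v, x⟫ ≤ 0} ∪ {x | ‖x‖ = 1 ∧ ⟪-v, x⟫ ≤ 0} := by
    intro x hx
    rw [mem_sphere_zero_iff_norm] at hx
    simpa [hx, inner_neg_left] using le_total ⟪v, x⟫ 0
  exact (measure_mono hcover).trans_lt ((measure_union_le _ _).trans_lt (ENNReal.add_lt_top.2
    ⟨hausdorffMeasure_hemisphere_lt_top hv,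
      hausdorffMeasure_hemisphere_lt_top ((norm_neg v).trans hv)⟩))

lemma integrable_sphereMeasure [Nontrivial E] {f : E → ℝ}
    (hf : ContinuousOn f (sphere 0 1)) : Integrable f (sphereMeasure E) := by
  obtain ⟨M, hM⟩ := (isCompact_sphere (0 : E) 1).exists_bound_of_continuousOn hf
  refine Integrable.of_bound (hf.aestronglyMeasurable isClosed_sphere.measurableSet) M ?_
  filter_upwards [ae_sphereMeasure_norm_eq_one] with ω hω
  exact hM ω (mem_sphere_zero_iff_norm.2 hω)

lemma setIntegral_sphere_hausdorffMeasure [Nontrivial E] {ρ : ℝ} (hρ : 0 < ρ) (f : E → ℝ) :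
    ∫ x in sphere 0 ρ, f x ∂(μH[(finrank ℝ E : ℝ) - 1]) =
      ρ ^ ((finrank ℝ E : ℝ) - 1) * ∫ ω, f (ρ • ω) ∂sphereMeasure E := by
  have hd : 0 ≤ (finrank ℝ E : ℝ) - 1 := sub_nonneg.2 (Nat.one_le_cast.2 finrank_pos)
  have h := (Homeomorph.smulOfNeZero ρ hρ.ne').measurableEmbedding.setIntegral_map
    (μ := (μH[(finrank ℝ E : ℝ) - 1] : Measure E)) f (sphere 0 ρ)
  have hpre : (ρ • ·) ⁻¹' sphere (0 : E) ρ = sphere 0 1 := by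
    ext x
    simp [norm_smul, abs_of_pos hρ, hρ.ne']
  simp only [Homeomorph.smulOfNeZero_apply, hpre, map_smul_hausdorffMeasure hd hρ,
    Measure.restrict_smul, integral_smul_measure, ENNReal.toReal_ofReal
      (inv_nonneg.2 (Real.rpow_nonneg hρ.le _)), smul_eq_mul] at h
  rw [sphereMeasure, ← h, mul_inv_cancel_left₀ (Real.rpow_pos_of_pos hρ _).ne']

lemma continuousOn_integral_sphereMeasure [Nontrivial E] {X : Type*} [TopologicalSpace X]
    [FirstCountableTopology X] {F : X → E → ℝ} {s : Set X} (hs : IsCompact s)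
    (hF : ContinuousOn (Function.uncurry F) (s ×ˢ sphere 0 1)) :
    ContinuousOn (fun τ => ∫ ω, F τ ω ∂sphereMeasure E) s := by
  obtain ⟨M, hM⟩ := (hs.prod (isCompact_sphere (0 : E) 1)).exists_bound_of_continuousOn hF
  refine continuousOn_of_dominated (bound := fun _ => M) (fun τ hτ => ?_) (fun τ hτ => ?_)
    (integrable_const M) ?_
  · exact (integrable_sphereMeasure (hF.comp (f := fun ω => (τ, ω)) (by fun_prop)
      fun ω hω => ⟨hτ, hω⟩)).aestronglyMeasurable
  · filter_upwards [ae_sphereMeasure_norm_eq_one] with ω hω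
    exact hM (τ, ω) ⟨hτ, mem_sphere_zero_iff_norm.2 hω⟩
  · filter_upwards [ae_sphereMeasure_norm_eq_one] with ω hω
    exact hF.comp (f := fun τ => (τ, ω)) (by fun_prop)
      fun τ hτ => ⟨hτ, mem_sphere_zero_iff_norm.2 hω⟩

lemma hasDerivAt_integral_sphereMeasure [Nontrivial E] {F F' : ℝ → E → ℝ} {s : Set ℝ} {t : ℝ}
    (hs : s ∈ 𝓝 t) (hF : ∀ τ ∈ s, ContinuousOn (F τ) (sphere 0 1))
    (hF' : ContinuousOn (Function.uncurry F') (s ×ˢ sphere 0 1))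
    (hderiv : ∀ τ ∈ s, ∀ ω ∈ sphere (0 : E) 1, HasDerivAt (F · ω) (F' τ ω) τ) :
    HasDerivAt (fun τ => ∫ ω, F τ ω ∂sphereMeasure E) (∫ ω, F' t ω ∂sphereMeasure E) t := by
  obtain ⟨K, hKt, hKs, hK⟩ := LocallyCompactSpace.local_compact_nhds t s hs
  obtain ⟨M, hM⟩ := (hK.prod (isCompact_sphere (0 : E) 1)).exists_bound_of_continuousOn
    (hF'.mono (Set.prod_mono_left hKs))
  have hts : t ∈ s := mem_of_mem_nhds hs
  have hF't : ContinuousOn (F' t) (sphere 0 1) :=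
    hF'.comp (f := fun ω => (t, ω)) (by fun_prop) fun ω hω => ⟨hts, hω⟩
  refine (hasDerivAt_integral_of_dominated_loc_of_deriv_le hKt (bound := fun _ => M) ?_
    (integrable_sphereMeasure (hF t hts)) (integrable_sphereMeasure hF't).aestronglyMeasurable ?_
    (integrable_const M) ?_).2
  · filter_upwards [hs] with τ hτ
    exact (integrable_sphereMeasure (hF τ hτ)).aestronglyMeasurable
  · filter_upwards [ae_sphereMeasure_norm_eq_one] with ω hω τ hτ
    exact hM (τ, ω) ⟨hτ, mem_sphere_zero_iff_norm.2 hω⟩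
  · filter_upwards [ae_sphereMeasure_norm_eq_one] with ω hω τ hτ
    exact hderiv τ (hKs hτ) ω (mem_sphere_zero_iff_norm.2 hω)

-- The rotations `exp (t • K)` preserve the integral of `F`; differentiate at `t = 0`.
lemma integral_fderiv_apply_skewAdjoint_sphereMeasure [Nontrivial E] {F : E → ℝ} {U : Set E}
    (hU : IsOpen U) (hSU : sphere 0 1 ⊆ U) (hF : ContDiffOn ℝ 1 F U) {K : E →L[ℝ] E}
    (hK : K ∈ skewAdjoint (E →L[ℝ] E)) :
    ∫ ω, fderiv ℝ F ω (K ω) ∂sphereMeasure E = 0 := by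
  let R : ℝ → E →L[ℝ] E := fun t => NormedSpace.exp (t • K)
  let : NormedAlgebra ℚ (E →L[ℝ] E) := .restrictScalars ℚ ℝ _
  have hRunitary (t : ℝ) : R t ∈ unitary (E →L[ℝ] E) :=
    NormedSpace.exp_mem_unitary_of_mem_skewAdjoint (skewAdjoint.smul_mem t hK)
  have hRsphere (t : ℝ) {ω : E} (hω : ω ∈ sphere 0 1) : R t ω ∈ sphere (0 : E) 1 := by
    rw [mem_sphere_zero_iff_norm] at hω ⊢
    rw [ContinuousLinearMap.norm_map_of_mem_unitary (hRunitary t), hω]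
  have hRderiv (t : ℝ) (ω : E) : HasDerivAt (fun s => R s ω) (K (R t ω)) t := by
    simpa using (hasDerivAt_exp_smul_const' K t).clm_apply (hasDerivAt_const t ω)
  have hRcont : Continuous fun p : ℝ × E => R p.1 p.2 := by
    have : Continuous R := continuous_iff_continuousAt.2 fun t =>
      (hasDerivAt_exp_smul_const' K t).continuousAt
    fun_prop
  have hderiv := hasDerivAt_integral_sphereMeasure (F := fun t ω => F (R t ω))
    (F' := fun t ω => fderiv ℝ F (R t ω) (K (R t ω))) (t := 0) univ_mem
    (fun t _ => hF.continuousOn.comp (R t).continuous.continuousOn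
      fun ω hω => hSU (hRsphere t hω))
    (((hF.continuousOn_fderiv_of_isOpen hU le_rfl).comp hRcont.continuousOn
      fun p hp => hSU (hRsphere p.1 hp.2)).clm_apply (K.continuous.comp hRcont).continuousOn)
    (fun t _ ω hω => ((hF.differentiableOn one_ne_zero).differentiableAt
      (hU.mem_nhds (hSU (hRsphere t hω)))).hasFDerivAt.comp_hasDerivAt t (hRderiv t ω))
  have hconst (t : ℝ) : ∫ ω, F (R t ω) ∂sphereMeasure E = ∫ ω, F ω ∂sphereMeasure E :=
    integral_comp_linearIsometryEquiv_sphereMeasure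
      (Unitary.linearIsometryEquiv ⟨R t, hRunitary t⟩) F
  simp only [hconst] at hderiv
  simpa [R] using hderiv.unique (hasDerivAt_const 0 _)

end SphereMeasure

section Divergence

open Module InnerProductSpace

lemma smul_mem_norm_preimage {E : Type*} [NormedAddCommGroup E] [NormedSpace ℝ E] {I : Set ℝ}
    {s : ℝ} (hs : s ∈ I ∩ Set.Ioi 0) {ω : E} (hω : ω ∈ sphere 0 1) : s • ω ∈ norm ⁻¹' I := by
  rw [Set.mem_preimage, norm_smul, mem_sphere_zero_iff_norm.1 hω, mul_one,
    Real.norm_of_nonneg hs.2.le]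
  exact hs.1

variable {E : Type*} [NormedAddCommGroup E] [InnerProductSpace ℝ E] [FiniteDimensional ℝ E]

variable (E) in
/-- The trace of an endomorphism, as a continuous linear functional. -/
def traceL : (E →L[ℝ] E) →L[ℝ] ℝ :=
  LinearMap.toContinuousLinearMap (LinearMap.trace ℝ E ∘ₗ ContinuousLinearMap.coeLM ℝ)

lemma traceL_one : traceL E 1 = finrank ℝ E := LinearMap.trace_one ℝ E

lemma traceL_smulRight (f : E →L[ℝ] ℝ) (x : E) : traceL E (f.smulRight x) = f x :=
  LinearMap.trace_smulRight (f : E →ₗ[ℝ] ℝ) x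

lemma traceL_eq_sum_inner {ι : Type*} [Fintype ι] (b : OrthonormalBasis ι ℝ E) (T : E →L[ℝ] E) :
    traceL E T = ∑ i, ⟪b i, T (b i)⟫ :=
  LinearMap.trace_eq_sum_inner (T : E →ₗ[ℝ] E) b

/-- The divergence of a vector field, the trace of its derivative. -/
def divergence (V : E → E) (x : E) : ℝ :=
  traceL E (fderiv ℝ V x)

lemma inner_smul_sub_inner_smul_mem_skewAdjoint (v w : E) :
    rankOne ℝ v w - rankOne ℝ w v ∈ skewAdjoint (E →L[ℝ] E) := by
  rw [skewAdjoint.mem_iff, star_sub, ContinuousLinearMap.star_eq_adjoint,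
    ContinuousLinearMap.star_eq_adjoint, adjoint_rankOne, adjoint_rankOne, neg_sub]

lemma sum_inner_mul_inner_skew {ι : Type*} [Fintype ι] (b : OrthonormalBasis ι ℝ E) {ω : E}
    (hω : ‖ω‖ = 1) (v : E) (T : E →L[ℝ] E) :
    ∑ i, ∑ j, (⟪b i, (rankOne ℝ (b j) (b i) - rankOne ℝ (b i) (b j)) ω⟫ * ⟪b j, v⟫ +
        ⟪b i, ω⟫ * ⟪b j, T ((rankOne ℝ (b j) (b i) - rankOne ℝ (b i) (b j)) ω)⟫) =
      traceL E T - ⟪ω, T ω⟫ - (finrank ℝ E - 1) * ⟪ω, v⟫ := by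
  classical
  have hnorm : ∑ i, ⟪b i, ω⟫ * ⟪b i, ω⟫ = 1 := by
    simpa [real_inner_comm, hω] using b.sum_inner_mul_inner ω ω
  have hpair (y : E) : ∑ j, ⟪b j, ω⟫ * ⟪b j, y⟫ = ⟪ω, y⟫ := by
    simpa [real_inner_comm] using b.sum_inner_mul_inner ω y
  have hpair' (i : ι) : ∑ j, ⟪b i, b j⟫ * ⟪b j, v⟫ = ⟪b i, v⟫ := b.sum_inner_mul_inner (b i) v
  have hT (j : ι) : ∑ i, ⟪b i, ω⟫ * ⟪b j, T (b i)⟫ = ⟪b j, T ω⟫ := by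
    conv_rhs => rw [← b.sum_repr' ω]
    simp [map_sum, inner_sum, inner_smul_right]
  simp only [sub_apply, rankOne_apply, inner_sub_right, inner_smul_right,
    map_sub, map_smul, real_inner_self_eq_norm_sq, b.norm_eq_one]
  calc _ = (∑ i, ⟪b i, ω⟫ * ∑ j, ⟪b i, b j⟫ * ⟪b j, v⟫) - ∑ _i : ι, ∑ j, ⟪b j, ω⟫ * ⟪b j, v⟫ +
        ((∑ i, ⟪b i, ω⟫ * ⟪b i, ω⟫ * ∑ j, ⟪b j, T (b j)⟫) -
          ∑ j, ⟪b j, ω⟫ * ∑ i, ⟪b i, ω⟫ * ⟪b j, T (b i)⟫) := by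
        simp only [Finset.mul_sum]
        rw [Finset.sum_comm (f := fun j i => ⟪b j, ω⟫ * (⟪b i, ω⟫ * ⟪b j, T (b i)⟫))]
        simp only [← Finset.sum_sub_distrib, ← Finset.sum_add_distrib]
        exact Finset.sum_congr rfl fun i _ => Finset.sum_congr rfl fun j _ => by ring
    _ = _ := by
        rw [← Finset.sum_mul, hnorm, traceL_eq_sum_inner b, finrank_eq_card_basis b.toBasis]
        simp only [hpair', hpair, hT, Finset.sum_const, Finset.card_univ, nsmul_eq_mul]
        ring

variable [MeasurableSpace E] [BorelSpace E] [Nontrivial E]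

lemma integral_sphereMeasure_tangential_divergence {V : E → E} {U : Set E} (hU : IsOpen U)
    (hSU : sphere 0 1 ⊆ U) (hV : ContDiffOn ℝ 1 V U) :
    ∫ ω, (traceL E (fderiv ℝ V ω) - ⟪ω, fderiv ℝ V ω ω⟫ -
      (finrank ℝ E - 1) * ⟪ω, V ω⟫) ∂sphereMeasure E = 0 := by
  let b := stdOrthonormalBasis ℝ E
  let K (i j) : E →L[ℝ] E := rankOne ℝ (b j) (b i) - rankOne ℝ (b i) (b j)
  let F (i j) (x : E) : ℝ := ⟪b i, x⟫ * ⟪b j, V x⟫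
  have hF (i j) : ContDiffOn ℝ 1 (F i j) U :=
    (contDiffOn_const.inner ℝ contDiffOn_id).mul (contDiffOn_const.inner ℝ hV)
  have hderiv (i j) {ω : E} (hω : ω ∈ U) (y : E) : fderiv ℝ (F i j) ω y =
      ⟪b i, y⟫ * ⟪b j, V ω⟫ + ⟪b i, ω⟫ * ⟪b j, fderiv ℝ V ω y⟫ := by
    have hVω := ((hV.differentiableOn one_ne_zero).differentiableAt (hU.mem_nhds hω)).hasFDerivAt
    have := ((innerSL ℝ (b i)).hasFDerivAt (x := ω)).mul ((innerSL ℝ (b j)).hasFDerivAt.comp ω hVω)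
    have heq : fderiv ℝ (F i j) ω = _ := this.fderiv
    rw [heq]
    simp [mul_comm, add_comm]
  have hint (i j) : Integrable (fun ω => fderiv ℝ (F i j) ω (K i j ω)) (sphereMeasure E) :=
    integrable_sphereMeasure ((((hF i j).continuousOn_fderiv_of_isOpen hU le_rfl).mono
      hSU).clm_apply (K i j).continuous.continuousOn)
  calc _ = ∫ ω, ∑ i, ∑ j, fderiv ℝ (F i j) ω (K i j ω) ∂sphereMeasure E := by
        refine integral_congr_ae ?_
        filter_upwards [ae_sphereMeasure_norm_eq_one] with ω hω
        simp only [hderiv _ _ (hSU (mem_sphere_zero_iff_norm.2 hω)), K]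
        exact (sum_inner_mul_inner_skew b hω _ _).symm
    _ = ∑ i, ∑ j, ∫ ω, fderiv ℝ (F i j) ω (K i j ω) ∂sphereMeasure E := by
        rw [integral_finsetSum _ fun i _ => integrable_finsetSum _ fun j _ => hint i j]
        exact Finset.sum_congr rfl fun i _ => integral_finsetSum _ fun j _ => hint i j
    _ = 0 := Finset.sum_eq_zero fun i _ => Finset.sum_eq_zero fun j _ =>
        integral_fderiv_apply_skewAdjoint_sphereMeasure hU hSU (hF i j)
          (inner_smul_sub_inner_smul_mem_skewAdjoint _ _)

lemma mul_integral_divergence_sphereMeasure {V : E → E} {I : Set ℝ} (hI : IsOpen I)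
    (hV : ContDiffOn ℝ 1 V (norm ⁻¹' I)) {ρ : ℝ} (hρ : ρ ∈ I ∩ Set.Ioi 0) :
    ρ * ∫ ω, divergence V (ρ • ω) ∂sphereMeasure E =
      ρ * ∫ ω, ⟪ω, fderiv ℝ V (ρ • ω) ω⟫ ∂sphereMeasure E +
        (finrank ℝ E - 1) * ∫ ω, ⟪ω, V (ρ • ω)⟫ ∂sphereMeasure E := by
  have hU : IsOpen (norm ⁻¹' I : Set E) := hI.preimage continuous_norm
  have htangential := integral_sphereMeasure_tangential_divergence (V := fun x => V (ρ • x))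
    (hU.preimage (continuous_const_smul ρ)) (fun _ => smul_mem_norm_preimage hρ)
    (hV.comp (contDiff_const_smul ρ).contDiffOn fun _ => id)
  have hscale {X : Type _} [TopologicalSpace X] {f : E → X} (hf : ContinuousOn f (norm ⁻¹' I)) :
      ContinuousOn (fun ω => f (ρ • ω)) (sphere 0 1) :=
    hf.comp (by fun_prop) fun _ => smul_mem_norm_preimage hρ
  have hDV := hscale (hV.continuousOn_fderiv_of_isOpen hU le_rfl)
  have hdiv : Integrable (fun ω => traceL E (fderiv ℝ V (ρ • ω))) (sphereMeasure E) :=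
    integrable_sphereMeasure ((traceL E).continuous.comp_continuousOn hDV)
  have hradial : Integrable (fun ω => ⟪ω, fderiv ℝ V (ρ • ω) ω⟫) (sphereMeasure E) :=
    integrable_sphereMeasure (continuousOn_id.inner (hDV.clm_apply continuousOn_id))
  have hinner : Integrable (fun ω => ⟪ω, V (ρ • ω)⟫) (sphereMeasure E) :=
    integrable_sphereMeasure (continuousOn_id.inner (hscale hV.continuousOn))
  simp only [fderiv_comp_smul, map_smul, smul_apply, inner_smul_right, smul_eq_mul] at htangential
  rw [integral_sub (by exact (hdiv.const_mul ρ).sub (hradial.const_mul ρ)) (hinner.const_mul _),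
    integral_sub (hdiv.const_mul ρ) (hradial.const_mul ρ), integral_const_mul, integral_const_mul,
    integral_const_mul] at htangential
  simp only [divergence]
  linarith

/-- The flux of `V` through the sphere of radius `ρ`, with the integral pulled back to the unit
sphere. -/
def sphereFlux (V : E → E) (ρ : ℝ) : ℝ :=
  ρ ^ ((finrank ℝ E : ℝ) - 1) * ∫ ω, ⟪ω, V (ρ • ω)⟫ ∂sphereMeasure E

lemma hasDerivAt_sphereFlux {V : E → E} {I : Set ℝ} (hI : IsOpen I)
    (hV : ContDiffOn ℝ 1 V (norm ⁻¹' I)) {ρ : ℝ} (hρ : ρ ∈ I ∩ Set.Ioi 0) :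
    HasDerivAt (sphereFlux V)
      (ρ ^ ((finrank ℝ E : ℝ) - 1) * ∫ ω, divergence V (ρ • ω) ∂sphereMeasure E) ρ := by
  have hU : IsOpen (norm ⁻¹' I : Set E) := hI.preimage continuous_norm
  have hDV := hV.continuousOn_fderiv_of_isOpen hU le_rfl
  have hd {x : E} (hx : x ∈ norm ⁻¹' I) : HasFDerivAt V (fderiv ℝ V x) x :=
    ((hV.differentiableOn one_ne_zero).differentiableAt (hU.mem_nhds hx)).hasFDerivAt
  have hradial := hasDerivAt_integral_sphereMeasure (F := fun s ω => ⟪ω, V (s • ω)⟫)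
    (F' := fun s ω => ⟪ω, fderiv ℝ V (s • ω) ω⟫) ((hI.inter isOpen_Ioi).mem_nhds hρ)
    (fun s hs => continuousOn_id.inner (hV.continuousOn.comp (by fun_prop)
      fun _ => smul_mem_norm_preimage hs))
    (continuousOn_snd.inner ((hDV.comp (by fun_prop : Continuous fun p : ℝ × E =>
      p.1 • p.2).continuousOn fun p hp => smul_mem_norm_preimage hp.1 hp.2).clm_apply
      continuousOn_snd))
    (fun s hs ω hω => by
      simpa [Function.comp_def] using (innerSL ℝ ω).hasFDerivAt.comp_hasDerivAt s
        ((hd (smul_mem_norm_preimage hs hω)).comp_hasDerivAt s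
          ((hasDerivAt_id s).smul_const ω)))
  have hρ0 : ρ ≠ 0 := hρ.2.ne'
  refine ((Real.hasDerivAt_rpow_const (.inl hρ0)).mul hradial).congr_deriv ?_
  rw [Real.rpow_sub_one hρ0]
  field_simp
  linear_combination (-ρ ^ ((finrank ℝ E : ℝ) - 1)) * mul_integral_divergence_sphereMeasure hI hV hρ

end Divergence

section DivergenceIdentities

open Module InnerProductSpace

variable {E : Type*} [NormedAddCommGroup E] [InnerProductSpace ℝ E] [FiniteDimensional ℝ E]
  {V Z : E → E} {a : E → E →L[ℝ] E} {f v w : E → ℝ} {x : E}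

lemma divergence_congr (h : V =ᶠ[𝓝 x] Z) : divergence V x = divergence Z x := by
  rw [divergence, h.fderiv_eq, divergence]

lemma divergence_add (hV : DifferentiableAt ℝ V x) (hZ : DifferentiableAt ℝ Z x) :
    divergence (fun y => V y + Z y) x = divergence V x + divergence Z x := by
  simp [divergence, fderiv_fun_add hV hZ]

lemma divergence_sub (hV : DifferentiableAt ℝ V x) (hZ : DifferentiableAt ℝ Z x) :
    divergence (fun y => V y - Z y) x = divergence V x - divergence Z x := by
  simp [divergence, fderiv_fun_sub hV hZ]

lemma divergence_smul (hf : DifferentiableAt ℝ f x) (hV : DifferentiableAt ℝ V x) :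
    divergence (fun y => f y • V y) x = ⟪gradient f x, V x⟫ + f x * divergence V x := by
  simp [divergence, fderiv_fun_smul hf hV, traceL_smulRight, inner_gradient_left, add_comm]

lemma contDiffAt_gradient {k m : WithTop ℕ∞} (hw : ContDiffAt ℝ k w x) (hmk : m + 1 ≤ k) :
    ContDiffAt ℝ m (gradient w) x :=
  (toDual ℝ E).symm.toContinuousLinearEquiv.contDiff.contDiffAt.comp x (hw.fderiv_right hmk)

lemma differentiableAt_gradient (hw : ContDiffAt ℝ 2 w x) :
    DifferentiableAt ℝ (gradient w) x :=
  (contDiffAt_gradient (m := 1) hw (by norm_num)).differentiableAt one_ne_zero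

lemma inner_fderiv_gradient_comm (hw : ContDiffAt ℝ 2 w x) (ξ η : E) :
    ⟪fderiv ℝ (gradient w) x ξ, η⟫ = ⟪fderiv ℝ (gradient w) x η, ξ⟫ := by
  have hgrad := differentiableAt_gradient hw
  have hDw : DifferentiableAt ℝ (fderiv ℝ w) x :=
    (hw.fderiv_right (m := 1) (by norm_num)).differentiableAt one_ne_zero
  have h (ξ η : E) : ⟪fderiv ℝ (gradient w) x ξ, η⟫ = fderiv ℝ (fderiv ℝ w) x ξ η := by
    have heq : (fun y => ⟪gradient w y, η⟫) = fun y => fderiv ℝ w y η :=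
      funext fun y => inner_gradient_left
    have hfderiv := congr(fderiv ℝ $heq x ξ)
    rw [fderiv_inner_apply ℝ hgrad (by fun_prop), fderiv_clm_apply hDw (by fun_prop)] at hfderiv
    simpa using hfderiv
  rw [h, h, (hw.isSymmSndFDerivAt (by simp)).eq]

lemma gradient_mul (hf : DifferentiableAt ℝ f x) (hv : DifferentiableAt ℝ v x) :
    gradient (fun y => f y * v y) x = f x • gradient v x + v x • gradient f x := by
  simp [gradient, fderiv_fun_mul hf hv]

lemma divergence_rellich (ha : DifferentiableAt ℝ a x) (hsymm : (a x : E →ₗ[ℝ] E).IsSymmetric)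
    (hZ : DifferentiableAt ℝ Z x) (hw : ContDiffAt ℝ 2 w x) :
    divergence (fun y => (2 * ⟪Z y, gradient w y⟫) • a y (gradient w y) -
        ⟪a y (gradient w y), gradient w y⟫ • Z y) x =
      2 * ⟪Z x, gradient w x⟫ * divergence (fun y => a y (gradient w y)) x +
      2 * ⟪fderiv ℝ Z x (a x (gradient w x)), gradient w x⟫ -
      ⟪fderiv ℝ a x (Z x) (gradient w x), gradient w x⟫ -
      ⟪a x (gradient w x), gradient w x⟫ * divergence Z x := by
  have hp : DifferentiableAt ℝ (gradient w) x := differentiableAt_gradient hw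
  have hap : DifferentiableAt ℝ (fun y => a y (gradient w y)) x := ha.clm_apply hp
  have hZp : DifferentiableAt ℝ (fun y => 2 * ⟪Z y, gradient w y⟫) x :=
    (hZ.inner ℝ hp).const_mul 2
  have happ : DifferentiableAt ℝ (fun y => ⟪a y (gradient w y), gradient w y⟫) x :=
    hap.inner ℝ hp
  have hHessian : ⟪Z x, fderiv ℝ (gradient w) x (a x (gradient w x))⟫ =
      ⟪fderiv ℝ (gradient w) x (Z x), a x (gradient w x)⟫ := by
    rw [real_inner_comm, inner_fderiv_gradient_comm hw]
  have hself (ξ η : E) : ⟪a x ξ, η⟫ = ⟪ξ, a x η⟫ := hsymm ξ η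
  rw [divergence_sub (hZp.fun_smul hap) (happ.fun_smul hZ), divergence_smul hZp hap,
    divergence_smul happ hZ, inner_gradient_left, inner_gradient_left,
    fderiv_const_mul (hZ.inner ℝ hp), smul_apply, fderiv_inner_apply ℝ hZ hp,
    fderiv_inner_apply ℝ hap hp, fderiv_clm_apply ha hp]
  simp only [add_apply, ContinuousLinearMap.comp_apply, ContinuousLinearMap.flip_apply,
    inner_add_left, smul_eq_mul, hHessian, hself (fderiv ℝ (gradient w) x (Z x))]
  rw [real_inner_comm (fderiv ℝ (gradient w) x (Z x))]
  ring

lemma divergence_clm_gradient_mul (ha : DifferentiableAt ℝ a x)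
    (hsymm : (a x : E →ₗ[ℝ] E).IsSymmetric) (hf : ContDiffAt ℝ 2 f x) (hv : ContDiffAt ℝ 2 v x) :
    divergence (fun y => a y (gradient (fun z => f z * v z) y)) x =
      f x * divergence (fun y => a y (gradient v y)) x + 2 * ⟪a x (gradient f x), gradient v x⟫ +
      v x * divergence (fun y => a y (gradient f y)) x := by
  have hdf := hf.differentiableAt two_ne_zero
  have hdv := hv.differentiableAt two_ne_zero
  have haf := ha.clm_apply (differentiableAt_gradient hf)
  have hav := ha.clm_apply (differentiableAt_gradient hv)
  have hproduct : (fun y => a y (gradient (fun z => f z * v z) y)) =ᶠ[𝓝 x]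
      fun y => f y • a y (gradient v y) + v y • a y (gradient f y) := by
    filter_upwards [hf.eventually (by simp), hv.eventually (by simp)] with y hfy hvy
    rw [gradient_mul (hfy.differentiableAt two_ne_zero) (hvy.differentiableAt two_ne_zero),
      map_add, map_smul, map_smul]
  have hself : ⟪gradient f x, a x (gradient v x)⟫ = ⟪a x (gradient f x), gradient v x⟫ :=
    (hsymm _ _).symm
  rw [divergence_congr hproduct, divergence_add (hdf.fun_smul hav) (hdv.fun_smul haf),
    divergence_smul hdf hav, divergence_smul hdv haf, hself, real_inner_comm (gradient v x)]
  ring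

end DivergenceIdentities

section RellichField

open Module InnerProductSpace

variable {E : Type*} [NormedAddCommGroup E] [InnerProductSpace ℝ E]
  {a : E → E →L[ℝ] E} {c κ s : ℝ} {v w : E → ℝ} {x : E}

/-- The coefficient `μ = ⟪a ∇r, ∇r⟫`, where `r = ‖x‖`. -/
def radialCoeff (a : E → E →L[ℝ] E) (x : E) : ℝ := ⟪a x x, x⟫ / ‖x‖ ^ 2

/-- The radial vector field `Z = r a ∇r / μ`. -/
def radialField (a : E → E →L[ℝ] E) (x : E) : E := (radialCoeff a x)⁻¹ • a x x

/-- The vector field `S = a ∇(log r)`. -/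
def logField (a : E → E →L[ℝ] E) (x : E) : E := (‖x‖ ^ 2)⁻¹ • a x x

lemma inner_logField_self : ⟪logField a x, x⟫ = radialCoeff a x := by
  rw [logField, radialCoeff, inner_smul_left, div_eq_inv_mul]
  rfl

lemma logField_eq_smul_radialField (hμ : radialCoeff a x ≠ 0) :
    logField a x = (radialCoeff a x / ‖x‖ ^ 2) • radialField a x := by
  rw [logField, radialField, smul_smul, div_mul_eq_mul_div, mul_inv_cancel₀ hμ, one_div]

lemma contDiffAt_norm_rpow {k : WithTop ℕ∞} (hx : x ≠ 0) (s : ℝ) :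
    ContDiffAt ℝ k (fun y : E => ‖y‖ ^ s) x :=
  (contDiffAt_norm ℝ hx).rpow_const_of_ne (norm_ne_zero_iff.2 hx)

lemma contDiffAt_radialCoeff (ha : ContDiffAt ℝ 1 a x) (hx : x ≠ 0) :
    ContDiffAt ℝ 1 (radialCoeff a) x :=
  ((ha.clm_apply contDiffAt_id).inner ℝ contDiffAt_id).div (contDiffAt_id.norm_sq ℝ)
    (pow_ne_zero 2 (norm_ne_zero_iff.2 hx))

lemma contDiffAt_radialField (ha : ContDiffAt ℝ 1 a x) (hx : x ≠ 0) (hμ : radialCoeff a x ≠ 0) :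
    ContDiffAt ℝ 1 (radialField a) x :=
  ((contDiffAt_radialCoeff ha hx).inv hμ).smul (ha.clm_apply contDiffAt_id)

lemma contDiffAt_logField (ha : ContDiffAt ℝ 1 a x) (hx : x ≠ 0) :
    ContDiffAt ℝ 1 (logField a) x :=
  ((contDiffAt_id.norm_sq ℝ).inv (pow_ne_zero 2 (norm_ne_zero_iff.2 hx))).smul
    (ha.clm_apply contDiffAt_id)

section Complete

variable [CompleteSpace E]

/-- The density on spheres whose integral over `{‖x‖ = ρ}` is the functional `G(ρ)`. -/
def rellichDensity (a : E → E →L[ℝ] E) (c : ℝ) (w : E → ℝ) (x : E) : ℝ :=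
  2 * ((⟪radialField a x, gradient w x⟫ / ‖x‖) ^ 2 * radialCoeff a x) -
    ⟪a x (gradient w x), gradient w x⟫ + w x ^ 2 - c * (w x ^ 2 / ‖x‖ ^ 2 * radialCoeff a x)

/-- The Rellich-type vector field whose flux through `{‖x‖ = ρ}` is `ρ * G(ρ)`. -/
def rellichField (a : E → E →L[ℝ] E) (c : ℝ) (w : E → ℝ) (x : E) : E :=
  (2 * ⟪radialField a x, gradient w x⟫) • a x (gradient w x) -
    ⟪a x (gradient w x), gradient w x⟫ • radialField a x + w x ^ 2 • radialField a x -
    (c * w x ^ 2) • logField a x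

lemma inner_rellichField (hx : x ≠ 0) (hsymm : (a x : E →ₗ[ℝ] E).IsSymmetric)
    (hμ : radialCoeff a x ≠ 0) :
    ⟪x, rellichField a c w x⟫ = ‖x‖ ^ 2 * rellichDensity a c w x := by
  have hx' : ‖x‖ ≠ 0 := norm_ne_zero_iff.2 hx
  have haxx : ⟪x, a x x⟫ = radialCoeff a x * ‖x‖ ^ 2 := by
    rw [real_inner_comm, radialCoeff, div_mul_cancel₀ _ (pow_ne_zero 2 hx')]
  have haxp : ⟪x, a x (gradient w x)⟫ =
      radialCoeff a x * ⟪radialField a x, gradient w x⟫ := by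
    rw [radialField, real_inner_smul_left, mul_inv_cancel_left₀ hμ]
    exact (hsymm x _).symm
  simp only [rellichField, rellichDensity, inner_sub_right, inner_add_right,
    real_inner_smul_right, haxp]
  rw [radialField, logField, real_inner_smul_right, real_inner_smul_right, haxx]
  field_simp

lemma gradient_norm_rpow (hx : x ≠ 0) (s : ℝ) :
    gradient (fun y : E => ‖y‖ ^ s) x = (s * ‖x‖ ^ (s - 2)) • x := by
  have hx' : 0 < ‖x‖ := norm_pos_iff.2 hx
  have hnorm : HasFDerivAt (fun y : E => (‖y‖ ^ 2) ^ (s / 2)) _ x :=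
    ((hasStrictFDerivAt_norm_sq x).hasFDerivAt).rpow_const (.inl (by positivity))
  have hpow (t r : ℝ) (ht : 0 ≤ t) : (t ^ 2) ^ r = t ^ (2 * r) := by
    rw [← Real.rpow_natCast, ← Real.rpow_mul ht, Nat.cast_ofNat]
  have heq : (fun y : E => ‖y‖ ^ s) = fun y => (‖y‖ ^ 2) ^ (s / 2) := by
    funext y
    rw [hpow _ _ (norm_nonneg y), mul_div_cancel₀ s two_ne_zero]
  refine ext_inner_right ℝ fun ξ => ?_
  rw [inner_gradient_left, heq, hnorm.fderiv, hpow _ _ hx'.le, mul_sub,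
    mul_div_cancel₀ s two_ne_zero, real_inner_smul_left]
  simp
  ring

end Complete

variable [FiniteDimensional ℝ E]

lemma contDiffAt_rellichField (ha : ContDiffAt ℝ 1 a x) (hx : x ≠ 0) (hμ : radialCoeff a x ≠ 0)
    (hw : ContDiffAt ℝ 2 w x) : ContDiffAt ℝ 1 (rellichField a c w) x := by
  have hp : ContDiffAt ℝ 1 (gradient w) x := contDiffAt_gradient hw (by norm_num)
  have hap : ContDiffAt ℝ 1 (fun y => a y (gradient w y)) x := ha.clm_apply hp
  have hZ := contDiffAt_radialField ha hx hμ
  have hw1 : ContDiffAt ℝ 1 (fun y => w y ^ 2) x := (hw.of_le (by norm_num)).pow 2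
  exact ((((contDiffAt_const.mul (hZ.inner ℝ hp)).smul hap).sub ((hap.inner ℝ hp).smul hZ)).add
    (hw1.smul hZ)).sub ((contDiffAt_const.mul hw1).smul (contDiffAt_logField ha hx))

lemma divergence_clm_gradient_norm_rpow (ha : ContDiffAt ℝ 1 a x) (hx : x ≠ 0) (s : ℝ) :
    divergence (fun y => a y (gradient (fun z => ‖z‖ ^ s) y)) x =
      ‖x‖ ^ s * (s * divergence (logField a) x + s ^ 2 / ‖x‖ ^ 2 * radialCoeff a x) := by
  have heq : (fun y => a y (gradient (fun z => ‖z‖ ^ s) y)) =ᶠ[𝓝 x]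
      fun y => (‖y‖ ^ s * s) • logField a y := by
    filter_upwards [isOpen_ne.mem_nhds hx] with y hy
    rw [gradient_norm_rpow hy, map_smul, logField, smul_smul, Real.rpow_sub (norm_pos_iff.2 hy),
      Real.rpow_ofNat, div_eq_mul_inv, mul_left_comm, mul_assoc, mul_left_comm]
  have hr := (contDiffAt_norm_rpow (k := 1) hx s).differentiableAt one_ne_zero
  rw [divergence_congr heq, divergence_smul (hr.mul_const s)
    ((contDiffAt_logField ha hx).differentiableAt one_ne_zero), inner_gradient_left,
    fderiv_mul_const hr, smul_apply, ← inner_gradient_left, gradient_norm_rpow hx,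
    real_inner_smul_left, real_inner_comm, inner_logField_self,
    Real.rpow_sub (norm_pos_iff.2 hx), Real.rpow_ofNat, smul_eq_mul]
  ring

lemma divergence_clm_gradient_norm_rpow_mul (ha : ContDiffAt ℝ 1 a x)
    (hsymm : (a x : E →ₗ[ℝ] E).IsSymmetric) (hx : x ≠ 0) (hv : ContDiffAt ℝ 2 v x)
    (hw : w = fun y => ‖y‖ ^ s * v y) :
    divergence (fun y => a y (gradient w y)) x =
      ‖x‖ ^ s * divergence (fun y => a y (gradient v y)) x + 2 * s * ⟪logField a x, gradient w x⟫ +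
        w x * (s * divergence (logField a) x - s ^ 2 / ‖x‖ ^ 2 * radialCoeff a x) := by
  have hx' : 0 < ‖x‖ := norm_pos_iff.2 hx
  have hpow := contDiffAt_norm_rpow (k := 2) hx s
  have hgrad : gradient w x = ‖x‖ ^ s • gradient v x + v x • (s * ‖x‖ ^ (s - 2)) • x := by
    rw [hw, gradient_mul (hpow.differentiableAt two_ne_zero) (hv.differentiableAt two_ne_zero),
      gradient_norm_rpow hx]
  have hSv : ⟪a x (gradient (fun y => ‖y‖ ^ s) x), gradient v x⟫ =
      ‖x‖ ^ s * s * ⟪logField a x, gradient v x⟫ := by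
    rw [gradient_norm_rpow hx, map_smul, logField, real_inner_smul_left, real_inner_smul_left,
      Real.rpow_sub hx', Real.rpow_ofNat]
    ring
  rw [hgrad, hw, divergence_clm_gradient_mul (ha.differentiableAt one_ne_zero) hsymm hpow hv, hSv,
    divergence_clm_gradient_norm_rpow ha hx, inner_add_right, real_inner_smul_right,
    real_inner_smul_right, real_inner_smul_right, inner_logField_self, Real.rpow_sub hx',
    Real.rpow_ofNat]
  ring

lemma divergence_rellichField (ha : ContDiffAt ℝ 1 a x) (hsymm : (a x : E →ₗ[ℝ] E).IsSymmetric)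
    (hx : x ≠ 0) (hμ : radialCoeff a x ≠ 0) (hw : ContDiffAt ℝ 2 w x) :
    divergence (rellichField a c w) x =
      2 * ⟪radialField a x, gradient w x⟫ *
        (divergence (fun y => a y (gradient w y)) x + w x) +
      2 * ⟪fderiv ℝ (radialField a) x (a x (gradient w x)), gradient w x⟫ -
      ⟪fderiv ℝ a x (radialField a x) (gradient w x), gradient w x⟫ -
      ⟪a x (gradient w x), gradient w x⟫ * divergence (radialField a) x -
      2 * c * w x * ⟪logField a x, gradient w x⟫ +
      w x ^ 2 * (divergence (radialField a) x - c * divergence (logField a) x) := by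
  have ha' := ha.differentiableAt one_ne_zero
  have hZ := (contDiffAt_radialField ha hx hμ).differentiableAt one_ne_zero
  have hS := (contDiffAt_logField ha hx).differentiableAt one_ne_zero
  have hp := differentiableAt_gradient hw
  have hw1 := hw.differentiableAt two_ne_zero
  have hw2 : DifferentiableAt ℝ (fun y => w y ^ 2) x := hw1.pow 2
  have hgrad (ξ : E) : ⟪gradient (fun y => w y ^ 2) x, ξ⟫ = 2 * w x * ⟪ξ, gradient w x⟫ := by
    rw [inner_gradient_left, fderiv_fun_pow 2 hw1, real_inner_comm, inner_gradient_left]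
    simp
  have hcgrad (ξ : E) :
      ⟪gradient (fun y => c * w y ^ 2) x, ξ⟫ = c * ⟪gradient (fun y => w y ^ 2) x, ξ⟫ := by
    rw [inner_gradient_left, fderiv_const_mul hw2, inner_gradient_left, smul_apply, smul_eq_mul]
  have hap := ha'.clm_apply hp
  have hW := (((hZ.inner ℝ hp).const_mul 2).fun_smul hap).fun_sub ((hap.inner ℝ hp).fun_smul hZ)
  unfold rellichField
  rw [divergence_sub (hW.fun_add (hw2.fun_smul hZ)) ((hw2.const_mul c).fun_smul hS),
    divergence_add hW (hw2.fun_smul hZ), divergence_rellich ha' hsymm hZ hw,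
    divergence_smul hw2 hZ, divergence_smul (hw2.const_mul c) hS, hcgrad, hgrad, hgrad]
  ring

/-- The quadratic form in `∇w` of `div W - κ g`, apart from its purely radial part. -/
def gradientCoeff (a : E → E →L[ℝ] E) (κ : ℝ) (x : E) : E →L[ℝ] E :=
  (2 : ℝ) • fderiv ℝ (radialField a) x ∘L a x - fderiv ℝ a x (radialField a x) +
    (κ - divergence (radialField a) x) • a x

/-- The coefficient of `2 w ⟪Z, ∇w⟫` in `div W - κ g`, for `w = r ^ s v`. -/
def crossCoeff (a : E → E →L[ℝ] E) (s c : ℝ) (x : E) : ℝ :=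
  s * divergence (logField a) x - (s ^ 2 + c) / ‖x‖ ^ 2 * radialCoeff a x

/-- The coefficient of `w²` in `div W - κ g`. -/
def massCoeff (a : E → E →L[ℝ] E) (κ c : ℝ) (x : E) : ℝ :=
  divergence (radialField a) x - c * divergence (logField a) x -
    κ * (1 - c / ‖x‖ ^ 2 * radialCoeff a x)

lemma divergence_rellichField_sub (ha : ContDiffAt ℝ 1 a x) (hsymm : (a x : E →ₗ[ℝ] E).IsSymmetric)
    (hx : x ≠ 0) (hμ : radialCoeff a x ≠ 0) (hv : ContDiffAt ℝ 2 v x)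
    (hw : w = fun y => ‖y‖ ^ s * v y) (κ : ℝ) :
    divergence (rellichField a c w) x - κ * rellichDensity a c w x =
      2 * (‖x‖ ^ s * (divergence (fun y => a y (gradient v y)) x + v x)) *
        ⟪radialField a x, gradient w x⟫ +
      ⟪gradientCoeff a κ x (gradient w x), gradient w x⟫ +
      (4 * s - 2 * κ) * (radialCoeff a x / ‖x‖ ^ 2 * ⟪radialField a x, gradient w x⟫ ^ 2) +
      2 * (w x * ⟪radialField a x, gradient w x⟫) * crossCoeff a s c x +
      massCoeff a κ c x * w x ^ 2 := by
  have hw2 : ContDiffAt ℝ 2 w x := hw ▸ (contDiffAt_norm_rpow hx s).mul hv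
  have hwx : w x = ‖x‖ ^ s * v x := congrFun hw x
  have hlog : ⟪logField a x, gradient w x⟫ =
      radialCoeff a x / ‖x‖ ^ 2 * ⟪radialField a x, gradient w x⟫ := by
    rw [logField_eq_smul_radialField hμ, real_inner_smul_left]
  rw [divergence_rellichField ha hsymm hx hμ hw2,
    divergence_clm_gradient_norm_rpow_mul ha hsymm hx hv hw, hlog, gradientCoeff, crossCoeff,
    massCoeff, rellichDensity]
  simp only [add_apply, sub_apply, smul_apply, ContinuousLinearMap.comp_apply, inner_add_left,
    inner_sub_left, real_inner_smul_left]
  linear_combination 2 * ⟪radialField a x, gradient w x⟫ * hwx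

end RellichField

section Asymptotics

open Module InnerProductSpace Bornology

variable {E : Type*} [NormedAddCommGroup E]

lemma isOpen_norm_preimage_Ioi (r : ℝ) : IsOpen (norm ⁻¹' Set.Ioi r : Set E) :=
  isOpen_Ioi.preimage continuous_norm

lemma eventually_cobounded_lt_norm (r : ℝ) : ∀ᶠ x in cobounded E, r < ‖x‖ :=
  tendsto_norm_cobounded_atTop.eventually_gt_atTop r

lemma tendsto_div_norm_cobounded {f : E → ℝ} {b : ℝ} (hf : Tendsto f (cobounded E) (𝓝 b)) :
    Tendsto (fun x => f x / ‖x‖) (cobounded E) (𝓝 0) :=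
  hf.div_atTop tendsto_norm_cobounded_atTop

variable [InnerProductSpace ℝ E]

/-- A `C¹` field of symmetric operators on the exterior domain `{1 < ‖x‖}` which tends to the
identity at infinity and whose derivative is `o(‖x‖⁻¹)`. -/
structure AsymptoticallyEuclidean (a : E → E →L[ℝ] E) : Prop where
  contDiffOn : ContDiffOn ℝ 1 a (norm ⁻¹' Set.Ioi 1)
  isSymmetric : ∀ x, 1 < ‖x‖ → (a x : E →ₗ[ℝ] E).IsSymmetric
  tendsto_one : Tendsto a (cobounded E) (𝓝 1)
  tendsto_norm_mul_norm_fderiv : Tendsto (fun x => ‖x‖ * ‖fderiv ℝ a x‖) (cobounded E) (𝓝 0)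

namespace AsymptoticallyEuclidean

variable {a : E → E →L[ℝ] E} {x : E}

lemma contDiffAt (ha : AsymptoticallyEuclidean a) (hx : 1 < ‖x‖) : ContDiffAt ℝ 1 a x :=
  ha.contDiffOn.contDiffAt ((isOpen_norm_preimage_Ioi 1).mem_nhds hx)

lemma tendsto_norm_sub_one (ha : AsymptoticallyEuclidean a) :
    Tendsto (fun x => ‖a x - 1‖) (cobounded E) (𝓝 0) := by
  simpa using (ha.tendsto_one.sub_const 1).norm

lemma tendsto_radialCoeff (ha : AsymptoticallyEuclidean a) :
    Tendsto (radialCoeff a) (cobounded E) (𝓝 1) := by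
  refine tendsto_iff_norm_sub_tendsto_zero.2
    (squeeze_zero' (.of_forall fun _ => norm_nonneg _) ?_ ha.tendsto_norm_sub_one)
  filter_upwards [eventually_cobounded_lt_norm 0] with x hx
  have heq : radialCoeff a x - 1 = ⟪(a x - 1) x, x⟫ / ‖x‖ ^ 2 := by
    simp only [radialCoeff, sub_apply, inner_sub_left, one_apply_eq_self,
      real_inner_self_eq_norm_sq]
    field_simp
  rw [heq, norm_div, norm_pow, norm_norm, div_le_iff₀ (by positivity), sq, ← mul_assoc]
  exact (norm_inner_le_norm _ _).trans (by gcongr; exact (a x - 1).le_opNorm x)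

lemma fderiv_clm_apply_self (ha : AsymptoticallyEuclidean a) (hx : 1 < ‖x‖) :
    fderiv ℝ (fun y => a y y) x = a x + (fderiv ℝ a x).flip x := by
  rw [fderiv_clm_apply ((ha.contDiffAt hx).differentiableAt one_ne_zero)
    differentiableAt_fun_id]
  simp

lemma tendsto_fderiv_clm_apply_self (ha : AsymptoticallyEuclidean a) :
    Tendsto (fun x => fderiv ℝ (fun y => a y y) x) (cobounded E) (𝓝 1) := by
  have hflip : Tendsto (fun x => (fderiv ℝ a x).flip x) (cobounded E) (𝓝 0) :=
    squeeze_zero_norm (fun x => by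
      simpa [mul_comm] using (fderiv ℝ a x).flip.le_opNorm x) ha.tendsto_norm_mul_norm_fderiv
  refine Tendsto.congr' ?_ (by simpa using ha.tendsto_one.add hflip)
  filter_upwards [eventually_cobounded_lt_norm 1] with x hx
  exact (ha.fderiv_clm_apply_self hx).symm

lemma norm_mul_norm_fderiv_radialCoeff_le (ha : AsymptoticallyEuclidean a) (hx : 1 < ‖x‖) :
    ‖x‖ * ‖fderiv ℝ (radialCoeff a) x‖ ≤
      ‖fderiv ℝ (fun y => a y y) x - 1‖ + ‖a x - 1‖ + 2 * |radialCoeff a x - 1| := by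
  have hx0 : 0 < ‖x‖ := zero_lt_one.trans hx
  have hay : DifferentiableAt ℝ (fun y => a y y) x :=
    ((ha.contDiffAt hx).differentiableAt one_ne_zero).clm_apply differentiableAt_id
  have hnorm : DifferentiableAt ℝ (fun y : E => ‖y‖ ^ 2) x := differentiableAt_fun_id.norm_sq ℝ
  have hμ : DifferentiableAt ℝ (radialCoeff a) x :=
    (contDiffAt_radialCoeff (ha.contDiffAt hx) (norm_pos_iff.1 hx0)).differentiableAt one_ne_zero
  have hderiv (ξ : E) : ‖x‖ ^ 2 * fderiv ℝ (radialCoeff a) x ξ =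
      ⟪(fderiv ℝ (fun y => a y y) x - 1) ξ, x⟫ + ⟪(a x - 1) x, ξ⟫ -
        2 * (radialCoeff a x - 1) * ⟪x, ξ⟫ := by
    have hquot : (fun y => ‖y‖ ^ 2 * radialCoeff a y) =ᶠ[𝓝 x] fun y => ⟪a y y, y⟫ := by
      filter_upwards [(isOpen_norm_preimage_Ioi 1).mem_nhds hx] with y hy
      rw [radialCoeff, mul_div_cancel₀ _ (pow_pos (zero_lt_one.trans hy) 2).ne']
    have hfderiv := DFunLike.congr_fun (hquot.fderiv_eq (𝕜 := ℝ)) ξ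
    rw [fderiv_fun_mul hnorm hμ, fderiv_inner_apply ℝ hay differentiableAt_fun_id,
      fderiv_norm_sq_apply] at hfderiv
    simp only [add_apply, smul_apply, smul_eq_mul, coe_innerSL_apply, nsmul_eq_mul,
      Nat.cast_ofNat, fderiv_fun_id, ContinuousLinearMap.id_apply] at hfderiv
    simp only [sub_apply, one_apply_eq_self, inner_sub_left, real_inner_comm x ξ]
    linarith
  rw [← le_div_iff₀' hx0]
  refine ContinuousLinearMap.opNorm_le_bound _ (by positivity) fun ξ => ?_
  have hbound : ‖x‖ ^ 2 * ‖fderiv ℝ (radialCoeff a) x ξ‖ ≤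
      ‖fderiv ℝ (fun y => a y y) x - 1‖ * ‖ξ‖ * ‖x‖ + ‖a x - 1‖ * ‖x‖ * ‖ξ‖ +
        2 * |radialCoeff a x - 1| * (‖x‖ * ‖ξ‖) := by
    rw [← norm_norm x, ← norm_pow, ← norm_mul, norm_norm, hderiv]
    refine (norm_sub_le _ _).trans (add_le_add ((norm_add_le _ _).trans (add_le_add ?_ ?_)) ?_)
    · exact (norm_inner_le_norm _ _).trans (by gcongr; exact ContinuousLinearMap.le_opNorm _ _)
    · exact (norm_inner_le_norm _ _).trans (by gcongr; exact ContinuousLinearMap.le_opNorm _ _)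
    · rw [norm_mul, norm_mul, Real.norm_two, Real.norm_eq_abs]
      gcongr
      exact norm_inner_le_norm _ _
  refine le_of_mul_le_mul_left (hbound.trans_eq ?_) (pow_pos hx0 2)
  field_simp

lemma tendsto_norm_mul_norm_fderiv_radialCoeff (ha : AsymptoticallyEuclidean a) :
    Tendsto (fun x => ‖x‖ * ‖fderiv ℝ (radialCoeff a) x‖) (cobounded E) (𝓝 0) := by
  have hbound := ((ha.tendsto_fderiv_clm_apply_self.sub_const 1).norm.add
    ha.tendsto_norm_sub_one).add ((ha.tendsto_radialCoeff.sub_const 1).norm.const_mul 2)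
  simp only [sub_self, norm_zero, add_zero, mul_zero] at hbound
  refine squeeze_zero' (.of_forall fun _ => by positivity) ?_ hbound
  filter_upwards [eventually_cobounded_lt_norm 1] with x hx
  exact ha.norm_mul_norm_fderiv_radialCoeff_le hx

lemma tendsto_fderiv_radialField (ha : AsymptoticallyEuclidean a) :
    Tendsto (fderiv ℝ (radialField a)) (cobounded E) (𝓝 1) := by
  have hinv : Tendsto (fun x => (radialCoeff a x)⁻¹) (cobounded E) (𝓝 1) := by
    simpa using ha.tendsto_radialCoeff.inv₀ one_ne_zero
  have hmain : Tendsto (fun x => (radialCoeff a x)⁻¹ • fderiv ℝ (fun y => a y y) x)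
      (cobounded E) (𝓝 1) := by
    simpa using hinv.smul ha.tendsto_fderiv_clm_apply_self
  have herror : Tendsto (fun x => (fderiv ℝ (fun y => (radialCoeff a y)⁻¹) x).smulRight (a x x))
      (cobounded E) (𝓝 0) := by
    refine squeeze_zero_norm' ?_ (by simpa using (((hinv.pow 2).norm.mul
      ha.tendsto_norm_mul_norm_fderiv_radialCoeff).mul ha.tendsto_one.norm))
    filter_upwards [eventually_cobounded_lt_norm 1,
      ha.tendsto_radialCoeff.eventually_ne one_ne_zero] with x hx hμ
    have hdiff := (contDiffAt_radialCoeff (ha.contDiffAt hx)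
      (norm_pos_iff.1 (zero_lt_one.trans hx))).differentiableAt one_ne_zero
    have hderiv : fderiv ℝ (fun y => (radialCoeff a y)⁻¹) x =
        (-(radialCoeff a x ^ 2)⁻¹) • fderiv ℝ (radialCoeff a) x :=
      ((hasDerivAt_inv hμ).comp_hasFDerivAt x hdiff.hasFDerivAt).fderiv
    rw [hderiv, ContinuousLinearMap.norm_smulRight_apply, norm_smul, norm_neg,
      Real.norm_of_nonneg (by positivity)]
    calc _ ≤ (radialCoeff a x ^ 2)⁻¹ * ‖fderiv ℝ (radialCoeff a) x‖ * (‖a x‖ * ‖x‖) := by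
          gcongr
          exact (a x).le_opNorm x
      _ = _ := by ring
  refine Tendsto.congr' ?_ (by simpa using hmain.add herror)
  filter_upwards [eventually_cobounded_lt_norm 1,
    ha.tendsto_radialCoeff.eventually_ne one_ne_zero] with x hx hμ
  have ha' := ha.contDiffAt hx
  exact (fderiv_fun_smul (((contDiffAt_radialCoeff ha' (norm_pos_iff.1
    (zero_lt_one.trans hx))).inv hμ).differentiableAt one_ne_zero)
    ((ha'.differentiableAt one_ne_zero).clm_apply differentiableAt_fun_id)).symm

variable [FiniteDimensional ℝ E]

lemma tendsto_divergence_clm_apply_self (ha : AsymptoticallyEuclidean a) :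
    Tendsto (divergence fun y => a y y) (cobounded E) (𝓝 (finrank ℝ E)) := by
  rw [← traceL_one]
  exact ((traceL E).continuous.tendsto 1).comp ha.tendsto_fderiv_clm_apply_self

lemma tendsto_divergence_radialField (ha : AsymptoticallyEuclidean a) :
    Tendsto (divergence (radialField a)) (cobounded E) (𝓝 (finrank ℝ E)) := by
  rw [← traceL_one]
  exact ((traceL E).continuous.tendsto 1).comp ha.tendsto_fderiv_radialField

lemma tendsto_norm_sq_mul_divergence_logField (ha : AsymptoticallyEuclidean a) :
    Tendsto (fun x => ‖x‖ ^ 2 * divergence (logField a) x) (cobounded E)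
      (𝓝 (finrank ℝ E - 2)) := by
  refine Tendsto.congr' ?_ (by
    simpa using ha.tendsto_divergence_clm_apply_self.sub (ha.tendsto_radialCoeff.const_mul 2))
  filter_upwards [eventually_cobounded_lt_norm 1] with x hx
  have hx0 : 0 < ‖x‖ := zero_lt_one.trans hx
  have hlog : logField a = fun y => ‖y‖ ^ (-2 : ℝ) • a y y := by
    funext y
    rw [logField, Real.rpow_neg (norm_nonneg y), Real.rpow_ofNat]
  rw [hlog, divergence_smul ((contDiffAt_norm_rpow (k := 1) (norm_pos_iff.1 hx0) _).differentiableAt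
    one_ne_zero) (((ha.contDiffAt hx).differentiableAt one_ne_zero).clm_apply
    differentiableAt_fun_id), gradient_norm_rpow (norm_pos_iff.1 hx0), real_inner_smul_left,
    real_inner_comm, Real.rpow_sub hx0, Real.rpow_neg hx0.le, Real.rpow_ofNat, radialCoeff]
  field_simp
  ring

lemma tendsto_gradientCoeff (ha : AsymptoticallyEuclidean a) (κ : ℝ) :
    Tendsto (gradientCoeff a κ) (cobounded E) (𝓝 ((2 + κ - finrank ℝ E) • 1)) := by
  have hdrift : Tendsto (fun x => fderiv ℝ a x (radialField a x)) (cobounded E) (𝓝 0) := by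
    refine squeeze_zero_norm (fun x => ?_) (by simpa using (ha.tendsto_norm_mul_norm_fderiv.mul
      ((ha.tendsto_radialCoeff.inv₀ one_ne_zero).norm.mul ha.tendsto_one.norm)))
    rw [radialField, map_smul, norm_smul, norm_inv, Real.norm_eq_abs]
    calc _ ≤ |radialCoeff a x|⁻¹ * (‖fderiv ℝ a x‖ * (‖a x‖ * ‖x‖)) := by
          gcongr
          exact (fderiv ℝ a x).le_opNorm_of_le ((a x).le_opNorm x)
      _ = _ := by ring
  have hcomp : Tendsto (fun x => fderiv ℝ (radialField a) x ∘L a x) (cobounded E) (𝓝 1) :=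
    ha.tendsto_fderiv_radialField.mul ha.tendsto_one
  have hlimit := ((hcomp.const_smul (2 : ℝ)).sub hdrift).add
    ((ha.tendsto_divergence_radialField.const_sub κ).smul ha.tendsto_one)
  rwa [sub_zero, ← add_smul, ← add_sub_assoc] at hlimit

lemma tendsto_norm_mul_crossCoeff (ha : AsymptoticallyEuclidean a) (s c : ℝ) :
    Tendsto (fun x => ‖x‖ * crossCoeff a s c x) (cobounded E) (𝓝 0) := by
  refine Tendsto.congr' ?_ (tendsto_div_norm_cobounded
    ((ha.tendsto_norm_sq_mul_divergence_logField.const_mul s).sub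
      (ha.tendsto_radialCoeff.const_mul (s ^ 2 + c))))
  filter_upwards [eventually_cobounded_lt_norm 0] with x hx
  rw [crossCoeff]
  field_simp

lemma tendsto_massCoeff (ha : AsymptoticallyEuclidean a) (κ c : ℝ) :
    Tendsto (massCoeff a κ c) (cobounded E) (𝓝 (finrank ℝ E - κ)) := by
  have hlog := tendsto_div_norm_cobounded
    (tendsto_div_norm_cobounded ha.tendsto_norm_sq_mul_divergence_logField)
  have hμ := tendsto_div_norm_cobounded (tendsto_div_norm_cobounded ha.tendsto_radialCoeff)
  have hlimit := (ha.tendsto_divergence_radialField.sub (hlog.const_mul c)).sub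
    (((hμ.const_mul c).const_sub 1).const_mul κ)
  refine Tendsto.congr' ?_ (by simpa using hlimit)
  filter_upwards [eventually_cobounded_lt_norm 0] with x hx
  rw [massCoeff]
  field_simp

end AsymptoticallyEuclidean

lemma sub_mul_norm_sq_le_inner {T : E →L[ℝ] E} {b ε : ℝ} (hT : ‖T - b • 1‖ ≤ ε) (p : E) :
    (b - ε) * ‖p‖ ^ 2 ≤ ⟪T p, p⟫ := by
  have hinner : ⟪T p, p⟫ = ⟪(T - b • 1) p, p⟫ + b * ‖p‖ ^ 2 := by
    simp [inner_sub_left, real_inner_smul_left]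
  have hbound : |⟪(T - b • 1) p, p⟫| ≤ ε * ‖p‖ ^ 2 := by
    rw [sq, ← mul_assoc]
    exact (abs_real_inner_le_norm _ _).trans (by
      gcongr; exact (T - b • 1).le_of_opNorm_le hT p)
  linarith [neg_le_of_abs_le hbound]

/-- With `P = ‖∇w‖`, `q = ⟪Z, ∇w⟫` and `b = μ / r²`, the coefficients being within `ε = m / 20`
of their limits at infinity. -/
lemma rellich_form_lower_bound {δ m r b P q w F M X N : ℝ} (hm : 0 < m) (hmδ : m ≤ δ)
    (hmδ' : m ≤ 2 - δ) (hr : 0 < r) (hP : 0 ≤ P) (hb : 0 ≤ b) (hq : |q| ≤ 2 * r * P)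
    (hbq : b * q ^ 2 ≤ (1 + m / 20) * P ^ 2) (hM : (2 - δ - m / 20) * P ^ 2 ≤ M)
    (hX : |r * X| ≤ m / 20) (hN : δ - m / 20 ≤ N) :
    -(8 / m) * (r * F) ^ 2 ≤
      2 * F * q + M + (2 * δ - 2) * (b * q ^ 2) + 2 * (w * q) * X + N * w ^ 2 := by
  have hforce : -(4 * (r * |F|) * P) ≤ 2 * F * q := by
    have hFq : |F * q| ≤ |F| * (2 * r * P) := by
      rw [abs_mul]
      gcongr
    linarith [neg_le_of_abs_le hFq]
  have hyoung : 4 * (r * |F|) * P ≤ 8 / m * (r * F) ^ 2 + m / 2 * P ^ 2 := by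
    have hsquare : 8 / m * (r * F) ^ 2 + m / 2 * P ^ 2 - 4 * (r * |F|) * P =
        (4 * (r * |F|) - m * P) ^ 2 / (2 * m) := by
      rw [mul_pow, ← sq_abs F]
      field_simp
      ring
    linarith [show 0 ≤ (4 * (r * |F|) - m * P) ^ 2 / (2 * m) by positivity]
  have hcross : -(m / 10 * (w ^ 2 + P ^ 2)) ≤ 2 * (w * q) * X := by
    have hwqX : |w * q * X| ≤ |w| * (2 * P) * (m / 20) :=
      calc |w * q * X| = |w| * |q| * |X| := by rw [abs_mul, abs_mul]
        _ ≤ |w| * (2 * r * P) * |X| := by gcongr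
        _ = |w| * (2 * P) * |r * X| := by rw [abs_mul, abs_of_pos hr]; ring
        _ ≤ |w| * (2 * P) * (m / 20) := by gcongr
    have hAMGM : 2 * |w| * P ≤ w ^ 2 + P ^ 2 := sq_abs w ▸ two_mul_le_add_sq |w| P
    nlinarith [neg_le_of_abs_le hwqX]
  have hradial : (m - m / 5) * P ^ 2 ≤ M + (2 * δ - 2) * (b * q ^ 2) := by
    have hbq0 : 0 ≤ b * q ^ 2 := by positivity
    have hP2 := sq_nonneg P
    rcases le_total 1 δ with hδ | hδ
    · nlinarith [mul_nonneg (sub_nonneg.2 hδ) hbq0]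
    · nlinarith [mul_le_mul_of_nonneg_left hbq (sub_nonneg.2 hδ), mul_nonneg hm.le hP2,
        mul_nonneg (sub_nonneg.2 hmδ) hP2, mul_nonneg (mul_nonneg hm.le hP2)
          (sub_nonneg.2 (hm.le.trans hmδ))]
  nlinarith [mul_le_mul_of_nonneg_right hN (sq_nonneg w), mul_nonneg hm.le (sq_nonneg w),
    mul_nonneg hm.le (sq_nonneg P), mul_nonneg (sub_nonneg.2 hmδ) (sq_nonneg w)]

/-- The weight `r ^ ((n - 1) / 2)` applied to a function. -/
def weighted (v : E → ℝ) (x : E) : ℝ := ‖x‖ ^ (((finrank ℝ E : ℝ) - 1) / 2) * v x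

namespace AsymptoticallyEuclidean

variable [Nontrivial E] {a : E → E →L[ℝ] E}

lemma eventually_norm_radialField_le (ha : AsymptoticallyEuclidean a) :
    ∀ᶠ x in cobounded E, ‖radialField a x‖ ≤ 2 * ‖x‖ := by
  have hlimit : Tendsto (fun x => |radialCoeff a x|⁻¹ * ‖a x‖) (cobounded E) (𝓝 1) := by
    simpa using (ha.tendsto_radialCoeff.abs.inv₀ (by simp)).mul ha.tendsto_one.norm
  filter_upwards [hlimit.eventually_le_const one_lt_two] with x hx
  rw [radialField, norm_smul, norm_inv, Real.norm_eq_abs]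
  calc _ ≤ |radialCoeff a x|⁻¹ * (‖a x‖ * ‖x‖) := by gcongr; exact (a x).le_opNorm x
    _ ≤ 2 * ‖x‖ := by rw [← mul_assoc]; gcongr

lemma eventually_radial_sq_le (ha : AsymptoticallyEuclidean a) {b : ℝ} (hb : 1 < b) :
    ∀ᶠ x in cobounded E, ∀ p,
      radialCoeff a x / ‖x‖ ^ 2 * ⟪radialField a x, p⟫ ^ 2 ≤ b * ‖p‖ ^ 2 := by
  have hlimit : Tendsto (fun x => (radialCoeff a x)⁻¹ * ‖a x‖ ^ 2) (cobounded E) (𝓝 1) := by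
    simpa using (ha.tendsto_radialCoeff.inv₀ one_ne_zero).mul (ha.tendsto_one.norm.pow 2)
  filter_upwards [hlimit.eventually_le_const hb, eventually_cobounded_lt_norm 0,
    ha.tendsto_radialCoeff.eventually_const_lt one_pos] with x hx hx0 hμ p
  have hinner : ⟪a x x, p⟫ ^ 2 ≤ (‖a x‖ * ‖x‖ * ‖p‖) ^ 2 :=
    sq_le_sq' (neg_le_of_abs_le ((abs_real_inner_le_norm _ _).trans (by
      gcongr; exact (a x).le_opNorm x))) ((real_inner_le_norm _ _).trans (by
      gcongr; exact (a x).le_opNorm x))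
  calc radialCoeff a x / ‖x‖ ^ 2 * ⟪radialField a x, p⟫ ^ 2
      = (radialCoeff a x)⁻¹ / ‖x‖ ^ 2 * ⟪a x x, p⟫ ^ 2 := by
        rw [radialField, real_inner_smul_left]
        field_simp
    _ ≤ (radialCoeff a x)⁻¹ / ‖x‖ ^ 2 * (‖a x‖ * ‖x‖ * ‖p‖) ^ 2 := by gcongr
    _ = (radialCoeff a x)⁻¹ * ‖a x‖ ^ 2 * ‖p‖ ^ 2 := by field_simp
    _ ≤ b * ‖p‖ ^ 2 := by gcongr

lemma eventually_divergence_rellichField_sub_ge [FiniteDimensional ℝ E]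
    (ha : AsymptoticallyEuclidean a) {δ : ℝ} (hδ : δ ∈ Set.Ioo 0 2) (c : ℝ) :
    ∃ K ≥ 0, ∀ᶠ x in cobounded E, ∀ v, ContDiffAt ℝ 2 v x →
      -K * (‖x‖ * weighted (fun y => divergence (fun z => a z (gradient v z)) y + v y) x) ^ 2 ≤
        divergence (rellichField a c (weighted v)) x -
          (finrank ℝ E - δ) * rellichDensity a c (weighted v) x := by
  set m := min δ (2 - δ)
  have hm : 0 < m := lt_min hδ.1 (by linarith [hδ.2])
  have hM := tendsto_iff_norm_sub_tendsto_zero.1 (ha.tendsto_gradientCoeff (finrank ℝ E - δ))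
  have hX := (ha.tendsto_norm_mul_crossCoeff (((finrank ℝ E : ℝ) - 1) / 2) c).abs
  have hN := ha.tendsto_massCoeff (finrank ℝ E - δ) c
  rw [abs_zero] at hX
  rw [show 2 + ((finrank ℝ E : ℝ) - δ) - finrank ℝ E = 2 - δ by ring] at hM
  refine ⟨8 / m, by positivity, ?_⟩
  filter_upwards [eventually_cobounded_lt_norm 1, ha.eventually_norm_radialField_le,
    ha.tendsto_radialCoeff.eventually_const_lt one_pos,
    ha.eventually_radial_sq_le (b := 1 + m / 20) (by linarith),
    hM.eventually_le_const (show 0 < m / 20 by positivity),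
    hX.eventually_le_const (show 0 < m / 20 by positivity),
    hN.eventually_const_le (show δ - m / 20 < _ by linarith)]
    with x hx hZ hμ hradial hMx hXx hNx v hv
  have hx0 : 0 < ‖x‖ := zero_lt_one.trans hx
  have hform := rellich_form_lower_bound (w := weighted v x)
    (F := weighted (fun y => divergence (fun z => a z (gradient v z)) y + v y) x) hm
    (min_le_left δ _) (min_le_right δ _) hx0 (norm_nonneg (gradient (weighted v) x))
    (by positivity) ((abs_real_inner_le_norm _ _).trans (by gcongr)) (hradial _)
    (sub_mul_norm_sq_le_inner hMx _) hXx hNx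
  refine hform.trans_eq ?_
  rw [divergence_rellichField_sub (w := weighted v) (ha.contDiffAt hx) (ha.isSymmetric x hx)
    (norm_pos_iff.1 hx0) hμ.ne' hv rfl]
  simp only [weighted]
  ring

end AsymptoticallyEuclidean

end Asymptotics

section RellichEnergy

open Module InnerProductSpace Bornology

variable {E : Type*} [NormedAddCommGroup E] [InnerProductSpace ℝ E]
  {a : E → E →L[ℝ] E} {c δ ρ : ℝ} {v w : E → ℝ}

lemma contDiffAt_weighted {k : WithTop ℕ∞} {x : E} (hv : ContDiffAt ℝ k v x) (hx : x ≠ 0) :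
    ContDiffAt ℝ k (weighted v) x :=
  (contDiffAt_norm_rpow hx _).mul hv

lemma sq_norm_mul_weighted_le {x : E} {η : ℝ} (hv : |v x| ≤ η) :
    (‖x‖ * weighted v x) ^ 2 ≤ ‖x‖ ^ ((finrank ℝ E : ℝ) + 1) * η ^ 2 := by
  rcases (norm_nonneg x).eq_or_lt with hx | hx
  · rw [← hx, zero_mul, zero_pow two_ne_zero]
    positivity
  · have hpow : (‖x‖ * ‖x‖ ^ (((finrank ℝ E : ℝ) - 1) / 2)) ^ 2 =
        ‖x‖ ^ ((finrank ℝ E : ℝ) + 1) := by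
      rw [mul_comm, ← Real.rpow_add_one hx.ne', ← Real.rpow_mul_natCast hx.le]
      congr 1
      push_cast
      ring
    rw [weighted, ← mul_assoc, mul_pow, hpow]
    exact mul_le_mul_of_nonneg_left (sq_le_sq' (neg_le_of_abs_le hv) (le_of_abs_le hv))
      (by positivity)

/-- The assumptions on `a` over the shells `{‖x‖ ∈ I}` under which, for every `C²` function `w`,
`rellichField a c w` is `C¹` there, with `ρ ^ n * ∫ g(ρω) dω` as its flux. -/
structure RegularOnShells (a : E → E →L[ℝ] E) (I : Set ℝ) : Prop where
  isOpen : IsOpen I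
  pos : ∀ ρ ∈ I, 0 < ρ
  contDiffAt : ∀ x, ‖x‖ ∈ I → ContDiffAt ℝ 1 a x
  isSymmetric : ∀ x, ‖x‖ ∈ I → (a x : E →ₗ[ℝ] E).IsSymmetric
  radialCoeff_ne_zero : ∀ x, ‖x‖ ∈ I → radialCoeff a x ≠ 0

lemma AsymptoticallyEuclidean.exists_regularOnShells_Ioi
    (ha : AsymptoticallyEuclidean a) {p : E → Prop} (hp : ∀ᶠ x in cobounded E, p x) :
    ∃ R ≥ 1, RegularOnShells a (Set.Ioi R) ∧ ∀ x, R < ‖x‖ → p x := by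
  obtain ⟨R, -, hR⟩ := hasBasis_cobounded_norm.eventually_iff.1
    (hp.and (ha.tendsto_radialCoeff.eventually_ne one_ne_zero))
  have hR1 {ρ : ℝ} (hρ : max R 1 < ρ) : 1 < ρ := (le_max_right R 1).trans_lt hρ
  have hRx {x : E} (hx : max R 1 < ‖x‖) := hR ((le_max_left R 1).trans hx.le)
  exact ⟨max R 1, le_max_right R 1, ⟨isOpen_Ioi, fun ρ hρ => one_pos.trans (hR1 hρ),
    fun x hx => ha.contDiffAt (hR1 hx), fun x hx => ha.isSymmetric x (hR1 hx),
    fun x hx => (hRx hx).2⟩, fun x hx => (hRx hx).1⟩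

section Continuity

variable {X : Type*} [TopologicalSpace X] {s : Set X} {x : X → E}

lemma continuousOn_radialCoeff (hx : ContinuousOn x s) (hx0 : ∀ t ∈ s, x t ≠ 0)
    (ha : ContinuousOn (fun t => a (x t)) s) :
    ContinuousOn (fun t => radialCoeff a (x t)) s :=
  ((ha.clm_apply hx).inner (𝕜 := ℝ) hx).div (hx.norm.pow 2) fun t ht =>
    pow_ne_zero 2 (norm_ne_zero_iff.2 (hx0 t ht))

lemma continuousOn_radialField (hx : ContinuousOn x s) (hx0 : ∀ t ∈ s, x t ≠ 0)
    (ha : ContinuousOn (fun t => a (x t)) s) (hμ : ∀ t ∈ s, radialCoeff a (x t) ≠ 0) :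
    ContinuousOn (fun t => radialField a (x t)) s :=
  ((continuousOn_radialCoeff hx hx0 ha).inv₀ hμ).smul (ha.clm_apply hx)

end Continuity

variable [FiniteDimensional ℝ E]

lemma RegularOnShells.contDiffOn_rellichField {I : Set ℝ} (h : RegularOnShells a I)
    (hw : ∀ x, ‖x‖ ∈ I → ContDiffAt ℝ 2 w x) :
    ContDiffOn ℝ 1 (rellichField a c w) (norm ⁻¹' I) := fun x hx =>
  (contDiffAt_rellichField (h.contDiffAt x hx) (norm_pos_iff.1 (h.pos _ hx))
    (h.radialCoeff_ne_zero x hx) (hw x hx)).contDiffWithinAt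

lemma continuousOn_rellichDensity {X : Type*} [TopologicalSpace X] {s : Set X} {x : X → E}
    {w : X → E → ℝ} (hx : ContinuousOn x s) (hx0 : ∀ t ∈ s, x t ≠ 0)
    (ha : ContinuousOn (fun t => a (x t)) s) (hμ : ∀ t ∈ s, radialCoeff a (x t) ≠ 0)
    (hw : ContinuousOn (fun t => w t (x t)) s)
    (hw' : ContinuousOn (fun t => gradient (w t) (x t)) s) :
    ContinuousOn (fun t => rellichDensity a c (w t) (x t)) s := by
  have hnorm (t) (ht : t ∈ s) : ‖x t‖ ≠ 0 := norm_ne_zero_iff.2 (hx0 t ht)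
  have hμc := continuousOn_radialCoeff hx hx0 ha
  have hZ := continuousOn_radialField hx hx0 ha hμ
  exact (((((((hZ.inner (𝕜 := ℝ) hw').div hx.norm hnorm).pow 2).mul hμc).const_mul 2).sub
    ((ha.clm_apply hw').inner (𝕜 := ℝ) hw')).add (hw.pow 2)).sub
    ((((hw.pow 2).div (hx.norm.pow 2) fun t ht => pow_ne_zero 2 (hnorm t ht)).mul hμc).const_mul c)

variable [MeasurableSpace E] [BorelSpace E]

/-- The functional `G(ρ)`, with the constant `(n - 1) * (n - 3) / 4` replaced by `c`. -/
def rellichEnergy (a : E → E →L[ℝ] E) (c : ℝ) (w : E → ℝ) (ρ : ℝ) : ℝ :=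
  ∫ x in sphere 0 ρ, rellichDensity a c w x ∂μH[(finrank ℝ E : ℝ) - 1]

lemma RegularOnShells.sphereFlux_rellichField {I : Set ℝ} (h : RegularOnShells a I) (hρ : ρ ∈ I) :
    sphereFlux (rellichField a c w) ρ =
      ρ ^ (finrank ℝ E : ℝ) * ∫ ω, rellichDensity a c w (ρ • ω) ∂sphereMeasure E := by
  have hρ0 := h.pos ρ hρ
  have hpow : ρ ^ (finrank ℝ E : ℝ) = ρ ^ ((finrank ℝ E : ℝ) - 1) * ρ := by
    rw [← Real.rpow_add_one hρ0.ne', sub_add_cancel]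
  rw [sphereFlux, hpow, mul_assoc, ← integral_const_mul ρ]
  refine congrArg _ (integral_congr_ae ?_)
  filter_upwards [ae_sphereMeasure_norm_eq_one] with ω hω
  have hnorm : ‖ρ • ω‖ = ρ := by rw [norm_smul, hω, mul_one, Real.norm_of_nonneg hρ0.le]
  have hinner := inner_rellichField (c := c) (w := w) (x := ρ • ω)
    (norm_ne_zero_iff.1 (hnorm.trans_ne hρ0.ne')) (h.isSymmetric _ (hnorm.symm ▸ hρ))
    (h.radialCoeff_ne_zero _ (hnorm.symm ▸ hρ))
  rw [real_inner_smul_left, hnorm, sq, mul_assoc] at hinner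
  exact mul_left_cancel₀ hρ0.ne' hinner

variable [Nontrivial E]

lemma rellichEnergy_div_rpow (hρ : 0 < ρ) :
    rellichEnergy a c w ρ / ρ ^ ((finrank ℝ E : ℝ) - 1 - δ) =
      ρ ^ δ * ∫ ω, rellichDensity a c w (ρ • ω) ∂sphereMeasure E := by
  rw [rellichEnergy, setIntegral_sphere_hausdorffMeasure hρ, Real.rpow_sub hρ _ δ]
  field_simp

namespace RegularOnShells

variable {I : Set ℝ}

lemma integrable_divergence_rellichField (h : RegularOnShells a I)
    (hw : ∀ x, ‖x‖ ∈ I → ContDiffAt ℝ 2 w x) (hρ : ρ ∈ I) :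
    Integrable (fun ω => divergence (rellichField a c w) (ρ • ω)) (sphereMeasure E) :=
  integrable_sphereMeasure ((traceL E).continuous.comp_continuousOn
    (((h.contDiffOn_rellichField hw).continuousOn_fderiv_of_isOpen
      (h.isOpen.preimage continuous_norm) le_rfl).comp (by fun_prop)
      fun _ => smul_mem_norm_preimage ⟨hρ, h.pos ρ hρ⟩))

lemma integrable_rellichDensity (h : RegularOnShells a I)
    (hw : ∀ x, ‖x‖ ∈ I → ContDiffAt ℝ 2 w x) (hρ : ρ ∈ I) :
    Integrable (fun ω => rellichDensity a c w (ρ • ω)) (sphereMeasure E) := by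
  have hmaps {ω : E} (hω : ω ∈ sphere 0 1) : ‖ρ • ω‖ ∈ I :=
    smul_mem_norm_preimage ⟨hρ, h.pos ρ hρ⟩ hω
  have hsmul : ContinuousOn (fun ω : E => ρ • ω) (sphere 0 1) := by fun_prop
  exact integrable_sphereMeasure (continuousOn_rellichDensity hsmul
    (fun ω hω => norm_pos_iff.1 (h.pos _ (hmaps hω)))
    (fun ω hω => (h.contDiffAt _ (hmaps hω)).continuousAt.comp_continuousWithinAt (hsmul ω hω))
    (fun ω hω => h.radialCoeff_ne_zero _ (hmaps hω))
    (fun ω hω => (hw _ (hmaps hω)).continuousAt.comp_continuousWithinAt (hsmul ω hω))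
    (fun ω hω => (contDiffAt_gradient (k := 2) (m := 1) (hw _ (hmaps hω))
      (by norm_num)).continuousAt.comp_continuousWithinAt (hsmul ω hω)))

lemma hasDerivAt_rpow_mul_integral_rellichDensity (h : RegularOnShells a I)
    (hw : ∀ x, ‖x‖ ∈ I → ContDiffAt ℝ 2 w x) (hρ : ρ ∈ I) :
    HasDerivAt (fun s => s ^ δ * ∫ ω, rellichDensity a c w (s • ω) ∂sphereMeasure E)
      (ρ ^ (δ - 1) * ∫ ω, (divergence (rellichField a c w) (ρ • ω) -
        (finrank ℝ E - δ) * rellichDensity a c w (ρ • ω)) ∂sphereMeasure E) ρ := by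
  have hρ0 := h.pos ρ hρ
  have hderiv := (Real.hasDerivAt_rpow_const (p := δ - finrank ℝ E) (.inl hρ0.ne')).mul
    (hasDerivAt_sphereFlux h.isOpen (h.contDiffOn_rellichField (c := c) hw) ⟨hρ, hρ0⟩)
  refine (hderiv.congr_deriv ?_).congr_of_eventuallyEq ?_
  · rw [h.sphereFlux_rellichField hρ, integral_sub (h.integrable_divergence_rellichField hw hρ)
      ((h.integrable_rellichDensity hw hρ).const_mul _), integral_const_mul,
      Real.rpow_sub_one hρ0.ne', Real.rpow_sub_one hρ0.ne', Real.rpow_sub_one hρ0.ne',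
      Real.rpow_sub hρ0]
    field_simp
    ring
  · filter_upwards [h.isOpen.mem_nhds hρ] with s hs
    rw [Pi.mul_apply, h.sphereFlux_rellichField hs, Real.rpow_sub (h.pos s hs), ← mul_assoc,
      div_mul_cancel₀ _ (Real.rpow_pos_of_pos (h.pos s hs) _).ne']

lemma neg_mul_le_integral_divergence_rellichField_sub (h : RegularOnShells a I) {s M : ℝ}
    (hw : ∀ x, ‖x‖ ∈ I → ContDiffAt ℝ 2 w x) (hs : s ∈ I)
    (hlower : ∀ x, ‖x‖ = s → -M ≤
      divergence (rellichField a c w) x - (finrank ℝ E - δ) * rellichDensity a c w x) :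
    -M * (sphereMeasure E).real Set.univ ≤
      ∫ ω, (divergence (rellichField a c w) (s • ω) -
        (finrank ℝ E - δ) * rellichDensity a c w (s • ω)) ∂sphereMeasure E := by
  rw [mul_comm, ← smul_eq_mul, ← integral_const]
  refine integral_mono_ae (integrable_const _)
    ((h.integrable_divergence_rellichField hw hs).sub
      ((h.integrable_rellichDensity hw hs).const_mul _)) ?_
  filter_upwards [ae_sphereMeasure_norm_eq_one] with ω hω
  exact hlower _ (by rw [norm_smul, hω, mul_one, Real.norm_of_nonneg (h.pos s hs).le])

lemma rpow_mul_integral_rellichDensity_le (h : RegularOnShells a I) {ρ₁ ρ₂ M : ℝ}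
    (hI : Set.Icc ρ₁ ρ₂ ⊆ I) (hρ : ρ₁ ≤ ρ₂) (hδ : -finrank ℝ E ≤ δ)
    (hw : ∀ x, ‖x‖ ∈ I → ContDiffAt ℝ 2 w x) (hM : 0 ≤ M)
    (hlower : ∀ x, ‖x‖ ∈ Set.Icc ρ₁ ρ₂ → -(M * ‖x‖ ^ ((finrank ℝ E : ℝ) + 1)) ≤
      divergence (rellichField a c w) x - (finrank ℝ E - δ) * rellichDensity a c w x) :
    ρ₁ ^ δ * ∫ ω, rellichDensity a c w (ρ₁ • ω) ∂sphereMeasure E ≤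
      ρ₂ ^ δ * ∫ ω, rellichDensity a c w (ρ₂ • ω) ∂sphereMeasure E +
        M * (ρ₂ ^ (finrank ℝ E + δ) * (sphereMeasure E).real Set.univ * (ρ₂ - ρ₁)) := by
  have hderiv {s : ℝ} (hs : s ∈ Set.Icc ρ₁ ρ₂) :=
    h.hasDerivAt_rpow_mul_integral_rellichDensity (c := c) (δ := δ) hw (hI hs)
  have hbound : ∀ s ∈ interior (Set.Icc ρ₁ ρ₂),
      -(M * (ρ₂ ^ (finrank ℝ E + δ) * (sphereMeasure E).real Set.univ)) ≤
        deriv (fun s => s ^ δ * ∫ ω, rellichDensity a c w (s • ω) ∂sphereMeasure E) s := by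
    intro s hs
    replace hs := interior_subset hs
    have hs0 := h.pos s (hI hs)
    have hintegral := h.neg_mul_le_integral_divergence_rellichField_sub hw (hI hs)
      fun x hx => hx ▸ hlower x (hx ▸ hs)
    rw [(hderiv hs).deriv]
    calc _ ≤ -(M * (s ^ (finrank ℝ E + δ) * (sphereMeasure E).real Set.univ)) := by
          gcongr
          · linarith
          · exact hs.2
      _ = s ^ (δ - 1) * (-(M * s ^ ((finrank ℝ E : ℝ) + 1)) *
            (sphereMeasure E).real Set.univ) := by
          rw [show finrank ℝ E + δ = (δ - 1) + (finrank ℝ E + 1) by ring, Real.rpow_add hs0]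
          ring
      _ ≤ _ := by gcongr
  have hmean := (convex_Icc ρ₁ ρ₂).mul_sub_le_image_sub_of_le_deriv
    (fun s hs => (hderiv hs).continuousAt.continuousWithinAt)
    (fun s hs => (hderiv (interior_subset hs)).differentiableAt.differentiableWithinAt) hbound
    ρ₁ (Set.left_mem_Icc.2 hρ) ρ₂ (Set.right_mem_Icc.2 hρ) hρ
  linarith

end RegularOnShells

lemma AsymptoticallyEuclidean.exists_rellichDensity_quasi_monotone
    (ha : AsymptoticallyEuclidean a) (hδ : δ ∈ Set.Ioo 0 2) (c : ℝ) :
    ∃ R ≥ 1, RegularOnShells a (Set.Ioi R) ∧ ∀ ρ₁ ρ₂, R < ρ₁ → ρ₁ ≤ ρ₂ →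
      ∃ B, ∀ v η, ContDiff ℝ 2 v →
        (∀ x, ‖x‖ ∈ Set.Icc ρ₁ ρ₂ → |divergence (fun y => a y (gradient v y)) x + v x| ≤ η) →
        ρ₁ ^ δ * ∫ ω, rellichDensity a c (weighted v) (ρ₁ • ω) ∂sphereMeasure E ≤
          ρ₂ ^ δ * ∫ ω, rellichDensity a c (weighted v) (ρ₂ • ω) ∂sphereMeasure E + η ^ 2 * B := by
  obtain ⟨K, hK, hlower⟩ := ha.eventually_divergence_rellichField_sub_ge hδ c
  obtain ⟨R, hR1, hreg, hR⟩ := ha.exists_regularOnShells_Ioi hlower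
  refine ⟨R, hR1, hreg, fun ρ₁ ρ₂ hρ₁ hρ =>
    ⟨K * (ρ₂ ^ (finrank ℝ E + δ) * (sphereMeasure E).real Set.univ * (ρ₂ - ρ₁)),
      fun v η hv hη => ?_⟩⟩
  rw [mul_left_comm, ← mul_assoc]
  refine hreg.rpow_mul_integral_rellichDensity_le
    (fun ρ hρ' => hρ₁.trans_le hρ'.1) hρ
    ((neg_nonpos.2 (Nat.cast_nonneg _)).trans hδ.1.le)
    (fun x hx => contDiffAt_weighted hv.contDiffAt (norm_pos_iff.1 (hreg.pos _ hx)))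
    (by positivity) fun x hx => ?_
  refine le_trans ?_ (hR x (hρ₁.trans_le hx.1) v hv.contDiffAt)
  rw [neg_mul, neg_le_neg_iff, mul_assoc, mul_comm (η ^ 2)]
  exact mul_le_mul_of_nonneg_left (sq_norm_mul_weighted_le (hη x hx)) hK

end RellichEnergy

section Mollification

open Module InnerProductSpace ContinuousLinearMap
open scoped Convolution

variable {E : Type*} [NormedAddCommGroup E] [InnerProductSpace ℝ E] [FiniteDimensional ℝ E]
  [MeasurableSpace E] [BorelSpace E] {F : Type*} [NormedAddCommGroup F] [NormedSpace ℝ F]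

variable (E) in
/-- A smooth probability density supported in the closed unit ball. -/
def mollifier : E → ℝ :=
  (⟨1 / 2, 1, by norm_num, by norm_num⟩ : ContDiffBump (0 : E)).normed volume

lemma contDiff_mollifier {k : ℕ∞} : ContDiff ℝ k (mollifier E) :=
  ContDiffBump.contDiff_normed _

lemma continuous_mollifier : Continuous (mollifier E) :=
  ContDiffBump.continuous_normed _

lemma continuous_fderiv_mollifier : Continuous (fderiv ℝ (mollifier E)) :=
  (contDiff_mollifier (k := 1)).continuous_fderiv one_ne_zero

lemma tsupport_mollifier : tsupport (mollifier E) = closedBall 0 1 :=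
  ContDiffBump.tsupport_normed_eq _

lemma hasCompactSupport_mollifier : HasCompactSupport (mollifier E) :=
  ContDiffBump.hasCompactSupport_normed _

lemma integral_mollifier : ∫ z, mollifier E z = 1 :=
  ContDiffBump.integral_normed _

lemma mollifier_eq_zero {z : E} (hz : z ∉ closedBall 0 1) : mollifier E z = 0 :=
  image_eq_zero_of_notMem_tsupport (by rwa [tsupport_mollifier])

lemma fderiv_mollifier_eq_zero {z : E} (hz : z ∉ closedBall 0 1) : fderiv ℝ (mollifier E) z = 0 :=
  fderiv_of_notMem_tsupport ℝ (by rwa [tsupport_mollifier])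

lemma integral_fderiv_mollifier_mul_clm (v : E) (f : E →L[ℝ] ℝ) :
    ∫ z, fderiv ℝ (mollifier E) z v * f z = -f v := by
  have hint : Integrable (mollifier E) :=
    continuous_mollifier.integrable_of_hasCompactSupport hasCompactSupport_mollifier
  have h := integral_mul_fderiv_eq_neg_fderiv_mul_of_integrable (μ := volume)
    (f := mollifier E) (g := f) (v := v)
    (((continuous_fderiv_mollifier.clm_apply continuous_const).mul
      f.continuous).integrable_of_hasCompactSupport
        (hasCompactSupport_mollifier.fderiv_apply ℝ v).mul_right)
    (by simpa only [f.fderiv] using hint.mul_const _)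
    ((continuous_mollifier.mul f.continuous).integrable_of_hasCompactSupport
      hasCompactSupport_mollifier.mul_right)
    (fun x _ => (contDiff_mollifier (k := 1)).differentiable one_ne_zero x)
    (fun x _ => f.differentiableAt)
  simp only [f.fderiv, integral_mul_const, integral_mollifier, one_mul] at h
  rw [h, neg_neg]

lemma integral_fderiv_mollifier_clm (T : E →L[ℝ] E) :
    ∫ z, fderiv ℝ (mollifier E) z (T z) = -traceL E T := by
  let b := stdOrthonormalBasis ℝ E
  have hexpand (z : E) : fderiv ℝ (mollifier E) z (T z)
      = ∑ i, fderiv ℝ (mollifier E) z (b i) * (innerSL ℝ (b i) ∘L T) z := by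
    conv_lhs => rw [← b.sum_repr' (T z)]
    simp [mul_comm]
  have hint (i) : Integrable fun z =>
      fderiv ℝ (mollifier E) z (b i) * (innerSL ℝ (b i) ∘L T) z :=
    ((continuous_fderiv_mollifier.clm_apply continuous_const).mul
      (innerSL ℝ (b i) ∘L T).continuous).integrable_of_hasCompactSupport
        (hasCompactSupport_mollifier.fderiv_apply ℝ (b i)).mul_right
  simp_rw [hexpand, integral_finsetSum _ fun i _ => hint i, integral_fderiv_mollifier_mul_clm,
    traceL_eq_sum_inner b, Finset.sum_neg_distrib]
  rfl

lemma continuous_integral_of_eq_zero {X : Type*} [TopologicalSpace X] {K : Set E}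
    (hK : IsCompact K) {g : X → E → F} (hg : Continuous g.uncurry)
    (h0 : ∀ p, ∀ z ∉ K, g p z = 0) : Continuous fun p => ∫ z, g p z :=
  continuousOn_univ.1 <| continuousOn_integral_of_compact_support hK hg.continuousOn
    fun p z _ => h0 p z

/-- The average of `f` over the ball of radius `ε` around `x`, weighted by the rescaled
`mollifier`. For `ε = 0` it is `f x`. -/
def mollify (f : E → F) (ε : ℝ) (x : E) : F :=
  ∫ z, mollifier E z • f (x - ε • z)

lemma continuous_mollify {f : E → F} (hf : Continuous f) :
    Continuous fun p : ℝ × E => mollify f p.1 p.2 :=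
  continuous_integral_of_eq_zero (isCompact_closedBall 0 1)
    ((continuous_mollifier.comp continuous_snd).smul (hf.comp (by fun_prop)))
    fun _ _ hz => by rw [mollifier_eq_zero hz, zero_smul]

lemma mollify_zero [CompleteSpace F] (f : E → F) : mollify f 0 = f := by
  ext x
  simp [mollify, integral_smul_const, integral_mollifier]

lemma mollify_clm_comp [CompleteSpace F] {G : Type*} [NormedAddCommGroup G] [NormedSpace ℝ G]
    [CompleteSpace G] (T : F →L[ℝ] G) {f : E → F} (hf : Continuous f) (ε : ℝ) (x : E) :
    mollify (fun y => T (f y)) ε x = T (mollify f ε x) := by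
  simp_rw [mollify, ← map_smul]
  exact T.integral_comp_comm ((continuous_mollifier.smul
    (hf.comp (by fun_prop))).integrable_of_hasCompactSupport hasCompactSupport_mollifier.smul_right)

/-- The density of the image of `mollifier` under scaling by `ε > 0`. -/
def scaledMollifier (ε : ℝ) (x : E) : ℝ :=
  (ε ^ finrank ℝ E)⁻¹ * mollifier E (ε⁻¹ • x)

variable {ε : ℝ}

lemma contDiff_scaledMollifier {k : ℕ∞} : ContDiff ℝ k (scaledMollifier (E := E) ε) :=
  contDiff_const.mul (contDiff_mollifier.comp (contDiff_const_smul _))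

lemma hasCompactSupport_scaledMollifier (hε : ε ≠ 0) :
    HasCompactSupport (scaledMollifier (E := E) ε) :=
  (hasCompactSupport_mollifier.comp_smul (inv_ne_zero hε)).mul_left

lemma tsupport_scaledMollifier_subset (hε : 0 < ε) :
    tsupport (scaledMollifier (E := E) ε) ⊆ closedBall 0 ε := by
  refine closure_minimal (fun x hx => ?_) isClosed_closedBall
  contrapose! hx
  have : ε⁻¹ • x ∉ closedBall (0 : E) 1 := by
    simpa [norm_smul, abs_of_pos hε, inv_mul_le_iff₀ hε] using hx
  simp [scaledMollifier, mollifier_eq_zero this]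

lemma fderiv_scaledMollifier (x : E) :
    fderiv ℝ (scaledMollifier ε) x
      = (ε ^ finrank ℝ E)⁻¹ • ε⁻¹ • fderiv ℝ (mollifier E) (ε⁻¹ • x) := by
  have hd : DifferentiableAt ℝ (fun y : E => mollifier E (ε⁻¹ • y)) x :=
    ((contDiff_mollifier (k := 1)).comp (contDiff_const_smul _)).differentiable one_ne_zero x
  change fderiv ℝ (fun y => _ * _) x = _
  rw [fderiv_const_mul hd, fderiv_comp_smul]

lemma integral_comp_inv_smul (hε : 0 < ε) (g : E → F) :
    ∫ x, (ε ^ finrank ℝ E)⁻¹ • g (ε⁻¹ • x) = ∫ z, g z := by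
  rw [integral_smul, Measure.integral_comp_smul, inv_pow, inv_inv, abs_of_pos (by positivity),
    inv_smul_smul₀ (by positivity)]

lemma mollify_eq_convolution (hε : 0 < ε) (f : E → F) :
    mollify f ε = scaledMollifier ε ⋆[lsmul ℝ ℝ] f := by
  ext x
  rw [mollify, ← integral_comp_inv_smul hε]
  simp [convolution_def, scaledMollifier, mul_smul, smul_inv_smul₀ hε.ne']

lemma contDiff_mollify (hε : 0 < ε) {f : E → F} (hf : Continuous f) {k : ℕ∞} :
    ContDiff ℝ k (mollify f ε) := by
  rw [mollify_eq_convolution hε]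
  exact (hasCompactSupport_scaledMollifier hε.ne').contDiff_convolution_left _
    contDiff_scaledMollifier hf.locallyIntegrable

lemma hasFDerivAt_mollify [CompleteSpace F] (hε : 0 ≤ ε) {f : E → F} (hf : ContDiff ℝ 1 f)
    (hfs : HasCompactSupport f) (x : E) :
    HasFDerivAt (mollify f ε) (mollify (fderiv ℝ f) ε x) x := by
  obtain rfl | hε := hε.eq_or_lt
  · simp_rw [mollify_zero]
    exact (hf.differentiable one_ne_zero x).hasFDerivAt
  · simp_rw [mollify_eq_convolution hε]
    exact hfs.hasFDerivAt_convolution_right (lsmul ℝ ℝ)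
      (contDiff_scaledMollifier (k := 0)).continuous.locallyIntegrable hf x

lemma gradient_mollify (hε : 0 ≤ ε) {f : E → ℝ} (hf : ContDiff ℝ 1 f)
    (hfs : HasCompactSupport f) : gradient (mollify f ε) = mollify (gradient f) ε := by
  ext1 x
  simp only [gradient, (hasFDerivAt_mollify hε hf hfs x).fderiv]
  exact (mollify_clm_comp (toDual ℝ E).symm.toContinuousLinearEquiv.toContinuousLinearMap
    (hf.continuous_fderiv one_ne_zero) ε x).symm

lemma divergence_mollify (hε : 0 < ε) {p : E → E} (hp : Continuous p) (x : E) :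
    divergence (mollify p ε) x = ∫ t, fderiv ℝ (scaledMollifier ε) t (p (x - t)) := by
  have hc := hasCompactSupport_scaledMollifier (E := E) hε.ne'
  rw [divergence, mollify_eq_convolution hε, (hc.hasFDerivAt_convolution_left (lsmul ℝ ℝ)
    contDiff_scaledMollifier hp.locallyIntegrable x).fderiv, convolution_def,
    ← (traceL E).integral_comp_comm]
  · exact integral_congr_ae <| .of_forall fun t => traceL_smulRight _ _
  · exact (hc.fderiv ℝ).convolutionExists_left _
      (contDiff_scaledMollifier.continuous_fderiv one_ne_zero) hp.locallyIntegrable x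

lemma divergence_mollify_eq_inv_mul (hε : 0 < ε) {p : E → E} (hp : Continuous p) (x : E) :
    divergence (mollify p ε) x
      = ε⁻¹ * ∫ z, fderiv ℝ (mollifier E) z (p (x - ε • z)) := by
  rw [divergence_mollify hε hp, ← integral_const_mul, ← integral_comp_inv_smul hε
    fun z => ε⁻¹ * fderiv ℝ (mollifier E) z (p (x - ε • z))]
  simp [fderiv_scaledMollifier, smul_inv_smul₀ hε.ne']

end Mollification

section Commutator

open Module ContinuousLinearMap

variable {E : Type*} [NormedAddCommGroup E] [NormedSpace ℝ E] {F : Type*} [NormedAddCommGroup F]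
  [NormedSpace ℝ F]

/-- The average slope `(a x - a (x - ε • z)) / ε`, extended to `ε = 0` by `fderiv ℝ a x z`. -/
def averageSlope (a : E → F) (ε : ℝ) (x z : E) : F :=
  ∫ t in (0 : ℝ)..1, fderiv ℝ a (x - (t * ε) • z) z

lemma averageSlope_zero [CompleteSpace F] (a : E → F) (x z : E) :
    averageSlope a 0 x z = fderiv ℝ a x z := by
  simp [averageSlope]

lemma continuous_averageSlope {a : E → F} (ha : ContDiff ℝ 1 a) :
    Continuous fun p : (ℝ × E) × E => averageSlope a p.1.1 p.1.2 p.2 :=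
  intervalIntegral.continuous_parametric_intervalIntegral_of_continuous'
    (((ha.continuous_fderiv one_ne_zero).comp (by fun_prop)).clm_apply (by fun_prop)) 0 1

lemma smul_averageSlope [CompleteSpace F] {a : E → F} (ha : ContDiff ℝ 1 a) (ε : ℝ) (x z : E) :
    ε • averageSlope a ε x z = a x - a (x - ε • z) := by
  have hderiv (s : ℝ) :
      HasDerivAt (fun s : ℝ => -a (x - s • z)) (fderiv ℝ a (x - s • z) z) s := by
    have hline : HasDerivAt (fun s : ℝ => x - s • z) (-z) s := by
      simpa using ((hasDerivAt_id s).smul_const z).const_sub x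
    simpa using ((ha.differentiable one_ne_zero _).hasFDerivAt.comp_hasDerivAt s hline).fun_neg
  have h := intervalIntegral.integral_unitInterval_deriv_eq_sub (𝕜 := ℝ) (z₀ := 0) (z₁ := ε)
    (f := fun s => -a (x - s • z)) (f' := fun s => fderiv ℝ a (x - s • z) z)
    (((ha.continuous_fderiv one_ne_zero).comp (by fun_prop)).clm_apply
      continuous_const).continuousOn fun t _ => hderiv _
  simpa [averageSlope, neg_add_eq_sub] using h

end Commutator

section Friedrichs

open Module ContinuousLinearMap

variable {E : Type*} [NormedAddCommGroup E] [InnerProductSpace ℝ E] [FiniteDimensional ℝ E]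
  [MeasurableSpace E] [BorelSpace E]

/-- The commutator of `V ↦ div (a V)` with mollification at scale `ε`, applied to `p`, in a form
which makes sense for continuous `p` and for `ε = 0`. -/
def friedrichsCommutator (a : E → E →L[ℝ] E) (p : E → E) (ε : ℝ) (x : E) : ℝ :=
  traceL E ((fderiv ℝ a x).flip (mollify p ε x))
    + ∫ z, fderiv ℝ (mollifier E) z (averageSlope a ε x z (p (x - ε • z)))

variable {a : E → E →L[ℝ] E} {p : E → E}

lemma continuous_friedrichsCommutator (ha : ContDiff ℝ 1 a) (hp : Continuous p) :
    Continuous fun q : ℝ × E => friedrichsCommutator a p q.1 q.2 := by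
  refine .add ?_ <| continuous_integral_of_eq_zero (isCompact_closedBall 0 1) ?_
    fun _ z hz => by rw [fderiv_mollifier_eq_zero hz, zero_apply]
  · exact (traceL E).continuous.comp <| ((flipₗᵢ ℝ E E E).continuous.comp
      ((ha.continuous_fderiv one_ne_zero).comp continuous_snd)).clm_apply (continuous_mollify hp)
  · exact (continuous_fderiv_mollifier.comp continuous_snd).clm_apply
      ((continuous_averageSlope ha).clm_apply (hp.comp (by fun_prop)))

lemma friedrichsCommutator_zero (a : E → E →L[ℝ] E) (p : E → E) (x : E) :
    friedrichsCommutator a p 0 x = 0 := by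
  have h := integral_fderiv_mollifier_clm ((fderiv ℝ a x).flip (p x))
  simp only [flip_apply] at h
  simp [friedrichsCommutator, mollify_zero, averageSlope_zero, h]

lemma divergence_clm_mollify (ha : ContDiff ℝ 1 a) (hp : Continuous p) {ε : ℝ} (hε : 0 < ε)
    (x : E) :
    divergence (fun y => a y (mollify p ε y)) x
      = divergence (mollify (fun y => a y (p y)) ε) x + friedrichsCommutator a p ε x := by
  have hap (T : E →L[ℝ] E) : Continuous fun y => T (p y) := T.continuous.comp hp
  have hfderiv : fderiv ℝ (fun y => a y (mollify p ε y)) x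
      = (fderiv ℝ a x).flip (mollify p ε x) + fderiv ℝ (mollify (fun y => a x (p y)) ε) x := by
    have hm := (contDiff_mollify hε hp (k := 1)).differentiable one_ne_zero x
    rw [fderiv_clm_apply (ha.differentiable one_ne_zero x) hm, add_comm,
      show mollify (fun y => a x (p y)) ε = a x ∘ mollify p ε from
        funext fun y => mollify_clm_comp (a x) hp ε y,
      fderiv_comp x (a x).differentiableAt hm, (a x).fderiv]
  have hint {q : E → E} (hq : Continuous q) :
      Integrable fun z => fderiv ℝ (mollifier E) z (q (x - ε • z)) :=
    (continuous_fderiv_mollifier.clm_apply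
      (hq.comp (by fun_prop))).integrable_of_hasCompactSupport
        ((hasCompactSupport_mollifier.fderiv ℝ).mono fun z hz h => hz (by simp [h]))
  have hslope (z : E) : fderiv ℝ (mollifier E) z (averageSlope a ε x z (p (x - ε • z)))
      = ε⁻¹ * (fderiv ℝ (mollifier E) z (a x (p (x - ε • z)))
        - fderiv ℝ (mollifier E) z (a (x - ε • z) (p (x - ε • z)))) := by
    rw [← map_sub, ← sub_apply, ← smul_averageSlope ha ε x z]
    simp [hε.ne']
  have hcont : Continuous fun y => a y (p y) := ha.continuous.clm_apply hp
  rw [divergence, hfderiv, map_add, ← divergence, divergence_mollify_eq_inv_mul hε (hap _),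
    divergence_mollify_eq_inv_mul hε hcont, friedrichsCommutator]
  simp_rw [hslope]
  rw [integral_const_mul, integral_sub (hint (hap (a x))) (hint hcont)]
  ring

lemma eventually_abs_friedrichsCommutator_le (ha : ContDiff ℝ 1 a) (hp : Continuous p) {K : Set E}
    (hK : IsCompact K) {η : ℝ} (hη : 0 < η) :
    ∀ᶠ ε in 𝓝 (0 : ℝ), ∀ x ∈ K, |friedrichsCommutator a p ε x| ≤ η := by
  refine hK.eventually_forall_of_forall_eventually fun x _ => ?_
  refine ((continuous_friedrichsCommutator ha hp).abs.tendsto (0, x)).eventually_le_const ?_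
  simpa [friedrichsCommutator_zero] using hη

end Friedrichs

section Cutoff

open scoped Manifold

variable {E : Type*} [NormedAddCommGroup E] [NormedSpace ℝ E] [FiniteDimensional ℝ E]
  {F : Type*} [NormedAddCommGroup F] [NormedSpace ℝ F]

lemma exists_contDiff_hasCompactSupport_eventuallyEq {U K : Set E} (hU : IsOpen U)
    (hK : IsCompact K) (hKU : K ⊆ U) {k : ℕ∞} {f : E → F} (hf : ContDiffOn ℝ k f U) :
    ∃ g : E → F, ContDiff ℝ k g ∧ HasCompactSupport g ∧ g =ᶠ[𝓝ˢ K] f := by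
  obtain ⟨L, hL, hKL, hLU⟩ := exists_compact_between hK hU hKU
  obtain ⟨ψ, hψ1, hψ0, -⟩ :=
    exists_contMDiffMap_one_nhds_of_subset_interior (n := k) 𝓘(ℝ, E) hK.isClosed hKL
  have hsupp : Function.support (fun x => ψ x • f x) ⊆ L := fun x hx => by
    contrapose! hx
    simp [hψ0 x hx]
  refine ⟨fun x => ψ x • f x, contDiff_iff_contDiffAt.2 fun x => ?_,
    .of_support_subset_isCompact hL hsupp, hψ1.mono fun x hx => by simp [hx]⟩
  by_cases hx : x ∈ U
  · exact ψ.contMDiff.contDiff.contDiffAt.smul (hf.contDiffAt (hU.mem_nhds hx))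
  · refine contDiffAt_const.congr_of_eventuallyEq (f := fun _ => (0 : F)) ?_
    filter_upwards [hL.isClosed.isOpen_compl.mem_nhds fun h => hx (hLU h)] with y hy
    exact Function.notMem_support.1 fun h => hy (hsupp h)

end Cutoff

section WeakSolution

open Module InnerProductSpace ContinuousLinearMap

variable {E : Type*} [NormedAddCommGroup E] [InnerProductSpace ℝ E] [FiniteDimensional ℝ E]
  [MeasurableSpace E] [BorelSpace E]

/-- `u` is a `C¹` weak solution of `-div (a ∇u) = u` in `U`. -/
structure IsWeakSolutionOn (a : E → E →L[ℝ] E) (U : Set E) (u : E → ℝ) : Prop where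
  contDiffOn : ContDiffOn ℝ 1 u U
  setIntegral_inner_gradient : ∀ φ : E → ℝ, ContDiff ℝ (⊤ : ℕ∞) φ → HasCompactSupport φ →
    tsupport φ ⊆ U → ∫ x in U, ⟪a x (gradient u x), gradient φ x⟫ = ∫ x in U, u x * φ x

variable {a : E → E →L[ℝ] E} {U K : Set E} {u v : E → ℝ} {q : E → E} {ε : ℝ} {x : E}

lemma tsupport_scaledMollifier_sub_subset (hε : 0 < ε) (x : E) :
    tsupport (fun y => scaledMollifier ε (x - y)) ⊆ closedBall x ε := fun y hy => by
  have := tsupport_scaledMollifier_subset hε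
    (tsupport_comp_subset_preimage (scaledMollifier ε) (continuous_sub_left x) hy)
  rwa [mem_closedBall_zero_iff, ← mem_closedBall_iff_norm'] at this

lemma inner_gradient_scaledMollifier_sub (x y ξ : E) :
    ⟪ξ, gradient (fun y => scaledMollifier ε (x - y)) y⟫
      = -fderiv ℝ (scaledMollifier ε) (x - y) ξ := by
  have hkernel := ((contDiff_scaledMollifier (ε := ε) (k := 1)).differentiable one_ne_zero
    (x - y)).hasFDerivAt.comp y ((hasFDerivAt_id y).const_sub x)
  rw [real_inner_comm, inner_gradient_left]
  exact (DFunLike.congr_fun hkernel.fderiv ξ).trans (by simp)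

lemma integral_eq_setIntegral_of_eqOn {X : Type*} [MeasurableSpace X] {μ : Measure X}
    {B U : Set X} {f g : X → ℝ} (hBU : B ⊆ U) (hfg : Set.EqOn f g B) (hf : ∀ y ∉ B, f y = 0)
    (hg : ∀ y ∉ B, g y = 0) : ∫ y, f y ∂μ = ∫ y in U, g y ∂μ := by
  have hfg' : f = g := funext fun y => by
    by_cases hy : y ∈ B
    · exact hfg hy
    · rw [hf y hy, hg y hy]
  rw [hfg', setIntegral_eq_integral_of_forall_compl_eq_zero fun y hy => hg y fun h => hy (hBU h)]

lemma IsWeakSolutionOn.divergence_mollify (h : IsWeakSolutionOn a U u) (hε : 0 < ε)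
    (hxU : closedBall x ε ⊆ U) (hq : Continuous q)
    (hqu : ∀ y ∈ closedBall x ε, q y = a y (gradient u y)) (hvu : Set.EqOn v u (closedBall x ε)) :
    divergence (mollify q ε) x = -mollify v ε x := by
  set φ : E → ℝ := fun y => scaledMollifier ε (x - y) with hφ_def
  have hφ : tsupport φ ⊆ closedBall x ε := tsupport_scaledMollifier_sub_subset hε x
  have hφ0 {y : E} (hy : y ∉ closedBall x ε) : φ y = 0 :=
    image_eq_zero_of_notMem_tsupport fun h => hy (hφ h)
  have hgradφ0 {y : E} (hy : y ∉ closedBall x ε) : gradient φ y = 0 := by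
    rw [gradient, fderiv_of_notMem_tsupport ℝ fun h => hy (hφ h), map_zero]
  have hflux : ∫ y, ⟪q y, gradient φ y⟫ = ∫ y in U, ⟪a y (gradient u y), gradient φ y⟫ :=
    integral_eq_setIntegral_of_eqOn hxU (fun y hy => by simp only [hqu y hy])
      (fun y hy => by rw [hgradφ0 hy, inner_zero_right])
      fun y hy => by rw [hgradφ0 hy, inner_zero_right]
  have hmass : ∫ y, v y * φ y = ∫ y in U, u y * φ y :=
    integral_eq_setIntegral_of_eqOn hxU (fun y hy => by simp only [hvu hy])
      (fun y hy => by rw [hφ0 hy, mul_zero]) fun y hy => by rw [hφ0 hy, mul_zero]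
  have hweak := h.setIntegral_inner_gradient φ
    (contDiff_scaledMollifier.comp (contDiff_const.sub contDiff_id))
    ((isCompact_closedBall x ε).of_isClosed_subset (isClosed_tsupport _) hφ) (hφ.trans hxU)
  rw [← hflux, ← hmass] at hweak
  rw [_root_.divergence_mollify hε hq, mollify_eq_convolution hε, convolution_def,
    ← integral_sub_left_eq_self (fun t => fderiv ℝ (scaledMollifier ε) t (q (x - t))) volume x,
    ← integral_sub_left_eq_self (fun t => lsmul ℝ ℝ (scaledMollifier ε t) (v (x - t))) volume x]
  simp_rw [hφ_def, inner_gradient_scaledMollifier_sub, integral_neg] at hweak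
  simpa [mul_comm, neg_eq_iff_eq_neg] using hweak

lemma IsWeakSolutionOn.exists_approximation (h : IsWeakSolutionOn a U u) (hU : IsOpen U)
    (ha : ContDiffOn ℝ 1 a U) (hK : IsCompact K) (hKU : K ⊆ U) :
    ∃ u₀ : E → ℝ, ContDiff ℝ 1 u₀ ∧ HasCompactSupport u₀ ∧ u₀ =ᶠ[𝓝ˢ K] u ∧
      ∀ η > 0, ∀ᶠ ε in 𝓝[>] 0, ∀ x ∈ K,
        |divergence (fun y => a y (gradient (mollify u₀ ε) y)) x + mollify u₀ ε x| ≤ η := by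
  obtain ⟨r, hr, hrU⟩ := hK.exists_cthickening_subset_open hU hKU
  have hK' : IsCompact (cthickening r K) := hK.cthickening
  obtain ⟨u₀, hu₀, hu₀c, hu₀u⟩ :=
    exists_contDiff_hasCompactSupport_eventuallyEq hU hK' hrU h.contDiffOn
  obtain ⟨a₀, ha₀, -, ha₀a⟩ := exists_contDiff_hasCompactSupport_eventuallyEq hU hK' hrU ha
  have hKK' : 𝓝ˢ K ≤ 𝓝ˢ (cthickening r K) := nhdsSet_mono (self_subset_cthickening K)
  have hp : Continuous (gradient u₀) :=
    (toDual ℝ E).symm.continuous.comp (hu₀.continuous_fderiv one_ne_zero)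
  refine ⟨u₀, hu₀, hu₀c, hu₀u.filter_mono hKK', fun η hη => ?_⟩
  filter_upwards [(eventually_abs_friedrichsCommutator_le ha₀ hp hK hη).filter_mono
    nhdsWithin_le_nhds, Ioc_mem_nhdsGT hr] with ε hcomm hε x hx
  have hball : closedBall x ε ⊆ cthickening r K :=
    (closedBall_subset_closedBall hε.2).trans (closedBall_subset_cthickening hx r)
  have hnhds {y : E} (hy : y ∈ cthickening r K) : 𝓝 y ≤ 𝓝ˢ (cthickening r K) :=
    nhds_le_nhdsSet hy
  have ha₀_near : (fun y => a y (gradient (mollify u₀ ε) y))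
      =ᶠ[𝓝 x] fun y => a₀ y (mollify (gradient u₀) ε y) :=
    (ha₀a.filter_mono (hnhds (hball (mem_closedBall_self hε.1.le)))).mono fun y hy => by
      simp only [hy, gradient_mollify hε.1.le hu₀ hu₀c]
  have hweak := h.divergence_mollify hε.1 (hball.trans hrU) (ha₀.continuous.clm_apply hp)
    (fun y hy => by
      rw [(ha₀a.filter_mono (hnhds (hball hy))).eq_of_nhds,
        ((hu₀u.filter_mono (hnhds (hball hy))).gradient).eq_of_nhds])
    fun y hy => (hu₀u.filter_mono (hnhds (hball hy))).eq_of_nhds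
  rw [divergence_congr ha₀_near, divergence_clm_mollify ha₀ hp hε.1, hweak]
  simpa using hcomm x hx

end WeakSolution

section Monotonicity

open Module

variable {E : Type*} [NormedAddCommGroup E] [InnerProductSpace ℝ E] [FiniteDimensional ℝ E]
  {a : E → E →L[ℝ] E} {c δ ρ : ℝ} {u v w : E → ℝ} {x : E}

lemma gradient_weighted (hx : x ≠ 0) (hv : DifferentiableAt ℝ v x) :
    gradient (weighted v) x = ‖x‖ ^ (((finrank ℝ E : ℝ) - 1) / 2) • gradient v x +
      v x • (((finrank ℝ E : ℝ) - 1) / 2 * ‖x‖ ^ (((finrank ℝ E : ℝ) - 1) / 2 - 2)) • x := by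
  rw [← gradient_norm_rpow hx]
  exact gradient_mul ((contDiffAt_norm_rpow hx _ (k := 1)).differentiableAt one_ne_zero) hv

lemma rellichDensity_congr (h : v =ᶠ[𝓝 x] w) :
    rellichDensity a c v x = rellichDensity a c w x := by
  rw [rellichDensity, rellichDensity, h.gradient.eq_of_nhds, h.eq_of_nhds]

variable [MeasurableSpace E] [BorelSpace E]

lemma continuousOn_gradient_weighted_mollify (hu : ContDiff ℝ 1 u) (hus : HasCompactSupport u)
    {s : Set E} (hs : ∀ x ∈ s, x ≠ 0) :
    ContinuousOn (fun t : ℝ × E => gradient (weighted (mollify u t.1)) t.2)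
      (Set.Ici 0 ×ˢ s) := by
  have hgrad : Continuous (gradient u) :=
    (InnerProductSpace.toDual ℝ E).symm.continuous.comp (hu.continuous_fderiv one_ne_zero)
  have hpow (r : ℝ) : ContinuousOn (fun t : ℝ × E => ‖t.2‖ ^ r) (Set.Ici 0 ×ˢ s) :=
    continuous_snd.norm.continuousOn.rpow_const fun t ht => .inl (norm_ne_zero_iff.2 (hs _ ht.2))
  have hcont (p q r : ℝ) : ContinuousOn (fun t : ℝ × E =>
      ‖t.2‖ ^ p • mollify (gradient u) t.1 t.2 + mollify u t.1 t.2 • (q * ‖t.2‖ ^ r) • t.2)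
      (Set.Ici 0 ×ˢ s) :=
    ((hpow p).smul (continuous_mollify hgrad).continuousOn).add
      ((continuous_mollify hu.continuous).continuousOn.smul
        (((hpow r).const_mul q).smul continuousOn_snd))
  let m : ℝ := ((finrank ℝ E : ℝ) - 1) / 2
  refine (hcont m m (m - 2)).congr fun t ht => ?_
  rw [gradient_weighted (hs _ ht.2) (hasFDerivAt_mollify ht.1 hu hus _).differentiableAt,
    gradient_mollify ht.1 hu hus]

variable [Nontrivial E]

lemma RegularOnShells.tendsto_integral_rellichDensity_mollify {I : Set ℝ}
    (h : RegularOnShells a I) (hu : ContDiff ℝ 1 u) (hus : HasCompactSupport u) (hρ : ρ ∈ I) :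
    Tendsto (fun ε => ∫ ω, rellichDensity a c (weighted (mollify u ε)) (ρ • ω) ∂sphereMeasure E)
      (𝓝[>] 0) (𝓝 (∫ ω, rellichDensity a c (weighted u) (ρ • ω) ∂sphereMeasure E)) := by
  have hmaps {t : ℝ × E} (ht : t ∈ Set.Icc (0 : ℝ) 1 ×ˢ sphere (0 : E) 1) : ‖ρ • t.2‖ ∈ I :=
    smul_mem_norm_preimage ⟨hρ, h.pos ρ hρ⟩ ht.2
  have hne {t : ℝ × E} (ht : t ∈ Set.Icc (0 : ℝ) 1 ×ˢ sphere (0 : E) 1) : ρ • t.2 ≠ 0 :=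
    norm_pos_iff.1 (h.pos _ (hmaps ht))
  have hscale : Continuous fun t : ℝ × E => ρ • t.2 := by fun_prop
  have hacont : ContinuousOn a (norm ⁻¹' I) := fun x hx =>
    (h.contDiffAt x hx).continuousAt.continuousWithinAt
  have hcont : ContinuousOn (fun t : ℝ × E =>
      rellichDensity a c (weighted (mollify u t.1)) (ρ • t.2)) (Set.Icc 0 1 ×ˢ sphere 0 1) := by
    refine continuousOn_rellichDensity (x := fun t : ℝ × E => ρ • t.2)
      (w := fun t => weighted (mollify u t.1)) hscale.continuousOn
      (fun t ht => hne ht)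
      (hacont.comp hscale.continuousOn fun t ht => hmaps ht)
      (fun t ht => h.radialCoeff_ne_zero _ (hmaps ht)) ?_ ?_
    · exact (hscale.norm.continuousOn.rpow_const fun t ht =>
        .inl (norm_ne_zero_iff.2 (hne ht))).mul
          ((continuous_mollify hu.continuous).comp (continuous_fst.prodMk hscale)).continuousOn
    · exact (continuousOn_gradient_weighted_mollify hu hus (s := {0}ᶜ) fun _ => id).comp
        (continuous_fst.prodMk hscale).continuousOn fun t ht => ⟨ht.1.1, hne ht⟩
  have hlim := continuousOn_integral_sphereMeasure
    (F := fun ε ω => rellichDensity a c (weighted (mollify u ε)) (ρ • ω)) isCompact_Icc hcont 0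
    ⟨le_rfl, zero_le_one⟩
  rw [ContinuousWithinAt, mollify_zero] at hlim
  refine hlim.mono_left ?_
  rw [← nhdsWithin_Ioc_eq_nhdsGT one_pos]
  exact nhdsWithin_mono _ Set.Ioc_subset_Icc_self

theorem G_monotone_general (ha : AsymptoticallyEuclidean a) (hδ : δ ∈ Set.Ioo 0 2) (c : ℝ) :
    ∃ R > 1, ∀ u, IsWeakSolutionOn a (norm ⁻¹' Set.Ioi 1) u →
      MonotoneOn (fun ρ => rellichEnergy a c (weighted u) ρ / ρ ^ ((finrank ℝ E : ℝ) - 1 - δ))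
        (Set.Ici R) := by
  obtain ⟨R, hR, hreg, hquasi⟩ := ha.exists_rellichDensity_quasi_monotone hδ c
  refine ⟨R + 1, by linarith, fun u hu ρ₁ hρ₁ ρ₂ hρ₂ hρ => ?_⟩
  have hRρ {ρ : ℝ} (h : ρ ∈ Set.Ici (R + 1)) : ρ ∈ Set.Ioi R := (lt_add_one R).trans_le h
  let K : Set E := norm ⁻¹' Set.Icc ρ₁ ρ₂
  have hK : IsCompact K := isCompact_of_isClosed_isBounded (isClosed_Icc.preimage continuous_norm)
    (isBounded_iff_forall_norm_le.2 ⟨ρ₂, fun x hx => hx.2⟩)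
  obtain ⟨u₀, hu₀, hu₀s, hu₀u, happrox⟩ := hu.exists_approximation (isOpen_norm_preimage_Ioi 1)
    ha.contDiffOn hK fun x hx => (hR.trans_lt (hRρ hρ₁)).trans_le hx.1
  obtain ⟨B, hB⟩ := hquasi ρ₁ ρ₂ (hRρ hρ₁) hρ
  have hlim {ρ : ℝ} (hρ : ρ ∈ Set.Icc ρ₁ ρ₂) (hρR : ρ ∈ Set.Ici (R + 1)) :
      Tendsto (fun ε => ρ ^ δ *
        ∫ ω, rellichDensity a c (weighted (mollify u₀ ε)) (ρ • ω) ∂sphereMeasure E) (𝓝[>] 0)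
        (𝓝 (rellichEnergy a c (weighted u) ρ / ρ ^ ((finrank ℝ E : ℝ) - 1 - δ))) := by
    rw [rellichEnergy_div_rpow (hreg.pos ρ (hRρ hρR))]
    refine .const_mul _ ?_
    convert hreg.tendsto_integral_rellichDensity_mollify hu₀ hu₀s (hRρ hρR) using 2
    refine integral_congr_ae ?_
    filter_upwards [ae_sphereMeasure_norm_eq_one] with ω hω
    have hmem : ρ • ω ∈ K :=
      smul_mem_norm_preimage ⟨hρ, hreg.pos ρ (hRρ hρR)⟩ (mem_sphere_zero_iff_norm.2 hω)
    exact rellichDensity_congr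
      ((hu₀u.filter_mono (nhds_le_nhdsSet hmem)).mono fun y hy => congrArg _ hy.symm)
  have hη (η : ℝ) (hη : 0 < η) := le_of_tendsto_of_tendsto (hlim (Set.left_mem_Icc.2 hρ) hρ₁)
    ((hlim (Set.right_mem_Icc.2 hρ) hρ₂).add_const (η ^ 2 * B)) <| by
      filter_upwards [happrox η hη, self_mem_nhdsWithin] with ε hε hε0
      exact hB _ η (contDiff_mollify hε0 hu₀.continuous) hε
  refine ge_of_tendsto (f := fun η : ℝ => _ + η ^ 2 * B) (x := 𝓝[>] 0) ?_
    (eventually_mem_nhdsWithin.mono hη)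
  simpa using (((continuous_pow 2).tendsto (0 : ℝ)).mono_left nhdsWithin_le_nhds
    |>.mul_const B).const_add _

end Monotonicity

section Energy

open Module

variable {E : Type*} [NormedAddCommGroup E] [InnerProductSpace ℝ E] [FiniteDimensional ℝ E]
  [MeasurableSpace E] [BorelSpace E] [Nontrivial E]
  {a : E → E →L[ℝ] E} {c ρ : ℝ} {w : E → ℝ} {x : E}

lemma RegularOnShells.rellichEnergy_eq_integral_add {I : Set ℝ} (h : RegularOnShells a I)
    (hw : ContDiffOn ℝ 1 w (norm ⁻¹' I)) (hρ : ρ ∈ I) :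
    let ν : Measure E := (μH[(finrank ℝ E : ℝ) - 1]).restrict (sphere 0 ρ)
    rellichEnergy a c w ρ =
      2 * ∫ x, (⟪radialField a x, gradient w x⟫ / ‖x‖) ^ 2 * radialCoeff a x ∂ν -
        ∫ x, ⟪a x (gradient w x), gradient w x⟫ ∂ν + ∫ x, w x ^ 2 ∂ν -
        c * ∫ x, w x ^ 2 / ‖x‖ ^ 2 * radialCoeff a x ∂ν := by
  have hmaps : Set.MapsTo (ρ • ·) (sphere (0 : E) 1) (norm ⁻¹' I) := fun ω =>
    smul_mem_norm_preimage ⟨hρ, h.pos ρ hρ⟩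
  have hx : ContinuousOn (fun ω : E => ρ • ω) (sphere 0 1) := by fun_prop
  have hx0 (ω : E) (hω : ω ∈ sphere 0 1) : ρ • ω ≠ 0 := norm_pos_iff.1 (h.pos _ (hmaps hω))
  have hnorm (ω : E) (hω : ω ∈ sphere 0 1) : ‖ρ • ω‖ ≠ 0 := norm_ne_zero_iff.2 (hx0 ω hω)
  have ha : ContinuousOn (fun ω => a (ρ • ω)) (sphere 0 1) := ContinuousOn.comp (s := sphere 0 1)
    (fun x hx => (h.contDiffAt x hx).continuousAt.continuousWithinAt) hx hmaps
  have hw0 := hw.continuousOn.comp hx hmaps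
  have hw1 : ContinuousOn (fun ω => gradient w (ρ • ω)) (sphere 0 1) :=
    (InnerProductSpace.toDual ℝ E).symm.continuous.comp_continuousOn
      ((hw.continuousOn_fderiv_of_isOpen (h.isOpen.preimage continuous_norm) le_rfl).comp hx hmaps)
  have hμ := continuousOn_radialCoeff hx hx0 ha
  have hZ := continuousOn_radialField hx hx0 ha fun ω hω => h.radialCoeff_ne_zero _ (hmaps hω)
  have hflux := (integrable_sphereMeasure
    ((((hZ.inner (𝕜 := ℝ) hw1).div hx.norm hnorm).pow 2).mul hμ)).const_mul 2
  have hdirichlet := integrable_sphereMeasure ((ha.clm_apply hw1).inner (𝕜 := ℝ) hw1)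
  have hmass := integrable_sphereMeasure (hw0.pow 2)
  have hpotential := (integrable_sphereMeasure
    (((hw0.pow 2).div (hx.norm.pow 2) fun ω hω => pow_ne_zero 2 (hnorm ω hω)).mul hμ)).const_mul c
  have hsplit := integral_sub ((hflux.sub hdirichlet).add hmass) hpotential
  rw [integral_add' (hflux.sub hdirichlet) hmass, integral_sub' hflux hdirichlet,
    integral_const_mul, integral_const_mul] at hsplit
  simp only [rellichEnergy, setIntegral_sphere_hausdorffMeasure (h.pos ρ hρ)]
  refine (congrArg _ hsplit).trans ?_
  simp only [Pi.mul_apply, Pi.pow_apply, Pi.div_apply, Function.comp_apply]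
  ring

end Energy

section MatrixCoefficients

lemma norm_fderiv_sum_smul_le {ι E F : Type*} [NormedAddCommGroup E] [NormedSpace ℝ E]
    [NormedAddCommGroup F] [NormedSpace ℝ F] (s : Finset ι) {g : ι → E → ℝ} {x : E}
    (hg : ∀ i ∈ s, DifferentiableAt ℝ (g i) x) (e : ι → F) :
    ‖fderiv ℝ (fun y => ∑ i ∈ s, g i y • e i) x‖ ≤ ∑ i ∈ s, ‖fderiv ℝ (g i) x‖ * ‖e i‖ := by
  rw [(HasFDerivAt.fun_sum fun i hi => (hg i hi).hasFDerivAt.smul_const (e i)).fderiv]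
  exact (norm_sum_le _ _).trans_eq (Finset.sum_congr rfl fun i _ =>
    ContinuousLinearMap.norm_smulRight_apply _ _)

open Module Bornology

variable {n : ℕ} {A : En n → Matrix (Fin n) (Fin n) ℝ} {lam α C : ℝ} {u : En n → ℝ} {x : En n}

/-- The field of operators on `ℝⁿ` given by a field of matrices. -/
def matrixField (A : En n → Matrix (Fin n) (Fin n) ℝ) (x : En n) : En n →L[ℝ] En n :=
  Matrix.toEuclideanCLM (𝕜 := ℝ) (A x)

lemma inner_toEuclideanCLM_apply (M : Matrix (Fin n) (Fin n) ℝ) (ξ η : En n) :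
    ⟪Matrix.toEuclideanCLM (𝕜 := ℝ) M ξ, η⟫ = quadForm M ξ η := by
  rw [real_inner_comm, Matrix.inner_toEuclideanCLM, dotProduct_comm]
  rfl

lemma radialCoeff_matrixField : radialCoeff (matrixField A) x = muA A x :=
  congrArg (· / ‖x‖ ^ 2) (inner_toEuclideanCLM_apply ..)

lemma inner_radialField_matrixField (f : En n → ℝ) :
    ⟪radialField (matrixField A) x, gradient f x⟫ = Zd A f x := by
  rw [radialField, radialCoeff_matrixField, PiLp.inner_apply]
  exact Finset.sum_congr rfl fun i _ => mul_comm _ _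

/-- The operator on `ℝⁿ` with the matrix unit at `p` as its matrix. -/
def unitOperator (p : Fin n × Fin n) : En n →L[ℝ] En n :=
  Matrix.toEuclideanCLM (𝕜 := ℝ) (Matrix.single p.1 p.2 1)

lemma matrixField_apply_eq_sum (A : En n → Matrix (Fin n) (Fin n) ℝ) (x : En n) :
    matrixField A x = ∑ p : Fin n × Fin n, A x p.1 p.2 • unitOperator p := by
  simp only [Fintype.sum_prod_type, unitOperator, ← map_smul, ← map_sum, Matrix.smul_single,
    smul_eq_mul, mul_one, ← Matrix.matrix_eq_sum_single, matrixField]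

lemma tendsto_const_mul_norm_rpow_neg (hα : 0 < α) (C : ℝ) :
    Tendsto (fun x : En n => C * ‖x‖ ^ (-α)) (cobounded (En n)) (𝓝 0) := by
  simpa using ((tendsto_rpow_neg_atTop hα).comp tendsto_norm_cobounded_atTop).const_mul C

namespace EllipticDecay

lemma radialCoeff_pos (hA : EllipticDecay A lam α C) (hlam : 0 < lam) (hx : 1 < ‖x‖) :
    0 < radialCoeff (matrixField A) x := by
  have hx0 : 0 < ‖x‖ := one_pos.trans hx
  rw [radialCoeff_matrixField]
  exact div_pos ((mul_pos hlam (pow_pos hx0 2)).trans_le (hA.2.2.1 x hx x).1) (pow_pos hx0 2)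

lemma contDiffOn_matrixField (hA : EllipticDecay A lam α C) :
    ContDiffOn ℝ 1 (matrixField A) (norm ⁻¹' Set.Ioi 1) := by
  rw [funext (matrixField_apply_eq_sum A)]
  exact .sum fun p _ => (hA.2.1 p.1 p.2).smul contDiffOn_const

lemma isSymmetric_matrixField (hA : EllipticDecay A lam α C) (hx : 1 < ‖x‖) :
    (matrixField A x : En n →ₗ[ℝ] En n).IsSymmetric := by
  rw [matrixField, Matrix.coe_toEuclideanCLM_eq_toEuclideanLin,
    Matrix.isSymmetric_toEuclideanLin_iff, Matrix.IsHermitian,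
    Matrix.conjTranspose_eq_transpose_of_trivial]
  exact hA.1 x hx

lemma regularOnShells (hA : EllipticDecay A lam α C) (hlam : 0 < lam) :
    RegularOnShells (matrixField A) (Set.Ioi 1) where
  isOpen := isOpen_Ioi
  pos _ hρ := one_pos.trans hρ
  contDiffAt _ hx := hA.contDiffOn_matrixField.contDiffAt ((isOpen_norm_preimage_Ioi 1).mem_nhds hx)
  isSymmetric _ hx := hA.isSymmetric_matrixField hx
  radialCoeff_ne_zero _ hx := (hA.radialCoeff_pos hlam hx).ne'

lemma tendsto_entry (hA : EllipticDecay A lam α C) (hα : 0 < α) (i j : Fin n) :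
    Tendsto (fun x => A x i j) (cobounded (En n)) (𝓝 ((1 : Matrix (Fin n) (Fin n) ℝ) i j)) := by
  refine tendsto_iff_norm_sub_tendsto_zero.2
    (squeeze_zero' (.of_forall fun x => norm_nonneg _) ?_ (tendsto_const_mul_norm_rpow_neg hα C))
  filter_upwards [eventually_cobounded_lt_norm 1] with x hx
  exact (le_add_of_nonneg_left (by positivity)).trans (hA.2.2.2 x hx i j)

lemma tendsto_norm_mul_norm_fderiv_entry (hA : EllipticDecay A lam α C) (hα : 0 < α)
    (i j : Fin n) :
    Tendsto (fun x => ‖x‖ * ‖fderiv ℝ (fun y => A y i j) x‖) (cobounded (En n)) (𝓝 0) := by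
  refine squeeze_zero' (.of_forall fun x => by positivity) ?_ (tendsto_const_mul_norm_rpow_neg hα C)
  filter_upwards [eventually_cobounded_lt_norm 1] with x hx
  have hgrad : ‖gradient (fun y => (A y - 1) i j) x‖ = ‖fderiv ℝ (fun y => A y i j) x‖ := by
    rw [gradient, LinearIsometryEquiv.norm_map]
    exact congrArg _ (fderiv_sub_const _)
  rw [← hgrad]
  exact (le_add_of_nonneg_right (abs_nonneg _)).trans (hA.2.2.2 x hx i j)

lemma tendsto_matrixField (hA : EllipticDecay A lam α C) (hα : 0 < α) :
    Tendsto (matrixField A) (cobounded (En n)) (𝓝 1) := by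
  have hone : matrixField (fun _ : En n => 1) 0 = 1 := map_one _
  rw [← hone, matrixField_apply_eq_sum, funext (matrixField_apply_eq_sum A)]
  exact tendsto_finsetSum _ fun p _ => (hA.tendsto_entry hα p.1 p.2).smul_const _

lemma tendsto_norm_mul_norm_fderiv_matrixField (hA : EllipticDecay A lam α C) (hα : 0 < α) :
    Tendsto (fun x => ‖x‖ * ‖fderiv ℝ (matrixField A) x‖) (cobounded (En n)) (𝓝 0) := by
  have hlim : Tendsto (fun x => ∑ p : Fin n × Fin n,
      ‖x‖ * ‖fderiv ℝ (fun y => A y p.1 p.2) x‖ * ‖unitOperator p‖) (cobounded (En n)) (𝓝 0) := by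
    simpa using tendsto_finsetSum Finset.univ fun p _ =>
      (hA.tendsto_norm_mul_norm_fderiv_entry hα p.1 p.2).mul_const ‖unitOperator p‖
  refine squeeze_zero' (.of_forall fun x => by positivity) ?_ hlim
  filter_upwards [eventually_cobounded_lt_norm 1] with x hx
  rw [funext (matrixField_apply_eq_sum A)]
  simp only [mul_assoc, ← Finset.mul_sum]
  exact mul_le_mul_of_nonneg_left (norm_fderiv_sum_smul_le _ (fun p _ =>
    ((hA.2.1 p.1 p.2).contDiffAt ((isOpen_norm_preimage_Ioi 1).mem_nhds hx)).differentiableAt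
      one_ne_zero) _) (norm_nonneg x)

lemma asymptoticallyEuclidean (hA : EllipticDecay A lam α C) (hα : 0 < α) :
    AsymptoticallyEuclidean (matrixField A) where
  contDiffOn := hA.contDiffOn_matrixField
  isSymmetric _ hx := hA.isSymmetric_matrixField hx
  tendsto_one := hA.tendsto_matrixField hα
  tendsto_norm_mul_norm_fderiv := hA.tendsto_norm_mul_norm_fderiv_matrixField hα

end EllipticDecay

lemma WeakSol.isWeakSolutionOn (hu : WeakSol A u) :
    IsWeakSolutionOn (matrixField A) (norm ⁻¹' Set.Ioi 1) u where
  contDiffOn := hu.1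
  setIntegral_inner_gradient φ hφ hφs hφU := by
    simp only [matrixField, inner_toEuclideanCLM_apply]
    exact hu.2 φ hφ hφs hφU

lemma EllipticDecay.Gfun_eq_rellichEnergy [Nontrivial (En n)] (hA : EllipticDecay A lam α C)
    (hlam : 0 < lam) (hu : ContDiffOn ℝ 1 u (OmegaExt n)) {ρ : ℝ} (hρ : 1 < ρ) :
    Gfun A u ρ =
      rellichEnergy (matrixField A) (((n : ℝ) - 1) * ((n : ℝ) - 3) / 4) (weighted u) ρ := by
  have hreg := hA.regularOnShells hlam
  have hw : ContDiffOn ℝ 1 (weighted u) (norm ⁻¹' Set.Ioi 1) := fun x hx =>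
    (contDiffAt_weighted (hu.contDiffAt ((isOpen_norm_preimage_Ioi 1).mem_nhds hx))
      (norm_pos_iff.1 (hreg.pos _ hx))).contDiffWithinAt
  rw [hreg.rellichEnergy_eq_integral_add hw hρ]
  simp only [inner_radialField_matrixField, radialCoeff_matrixField, matrixField,
    inner_toEuclideanCLM_apply]
  simp only [Gfun, sphInt, finrank_euclideanSpace_fin]
  have hweighted : weighted u = fun x => ‖x‖ ^ (((n : ℝ) - 1) / 2) * u x := by
    funext x
    rw [weighted, finrank_euclideanSpace_fin]
  rw [hweighted]

end MatrixCoefficients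

/-- **Theorem `mong2`.** Let `u` be a weak solution of `-div(A∇u) = u`
in `Ω`. For every `δ ∈ (0,1)` there exists `R₁ > 1` such that
`ρ ↦ G(ρ)/ρ^{n-1-δ}` is non-decreasing on `[R₁, ∞)`. -/
theorem G_monotone
    (n : ℕ) (hn : 2 ≤ n)
    (A : En n → Matrix (Fin n) (Fin n) ℝ) (lam α C : ℝ)
    (hlam0 : 0 < lam) (hlam1 : lam < 1) (hα : 0 < α) (hC : 0 < C)
    (hA : EllipticDecay A lam α C)
    (u : En n → ℝ) (hu : WeakSol A u) :
    ∀ δ ∈ Set.Ioo (0 : ℝ) 1, ∃ R₁ > (1 : ℝ),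
      MonotoneOn (fun ρ => Gfun A u ρ / ρ ^ ((n : ℝ) - 1 - δ)) (Set.Ici R₁) := by
  intro δ hδ
  have : Nontrivial (En n) := have : Nontrivial (Fin n) := Fin.nontrivial_iff_two_le.2 hn
    inferInstance
  obtain ⟨R, hR, hmono⟩ := G_monotone_general (hA.asymptoticallyEuclidean hα)
    ⟨hδ.1, hδ.2.trans one_lt_two⟩ (((n : ℝ) - 1) * ((n : ℝ) - 3) / 4)
  refine ⟨R, hR, (hmono u hu.isWeakSolutionOn).congr fun ρ hρ => ?_⟩
  rw [hA.Gfun_eq_rellichEnergy hlam0 hu.1 (hR.trans_le hρ), finrank_euclideanSpace_fin]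

end
end

section
/- Let u be a differentiable function on Ω, let h : (1, ∞) → ℝ be differentiable, and set v(x) = h(|x|) u(x). Then for every x ∈ Ω one has the pointwise identity (Zv(x)/r(x))² μ(x) − ⟨A(x)∇v(x), ∇v(x)⟩ = h(|x|)² [ (Zu(x)/r(x))² μ(x) − ⟨A(x)∇u(x), ∇u(x)⟩ ]. In particular, taking u ≡ 1, every radial function v(x) = h(|x|) satisfies (Zv/r)² μ = ⟨A∇v, ∇v⟩ on Ω. -/
open MeasureTheory Metric Filter

noncomputable section

/-!
Write `B = ⟨A(x)·, ·⟩` and let `G(ξ) = B(x, x) B(ξ, ξ) - B(x, ξ) B(ξ, x)` be the Gram determinant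
of `x` and `ξ` with respect to `B`. Since `Zf = B(x, ∇f) / μ` and `μ = B(x, x) / r²`,
`(Zf / r)² μ - ⟨A∇f, ∇f⟩ = -G(∇f) / B(x, x)`. The gradient of `h(r) u` is `h(r) ∇u` plus a multiple
of `x`, and column operations give `G(a ξ + b x) = a² G(ξ)`.
-/

section GramDet

variable {R M : Type*} [CommRing R] [AddCommGroup M] [Module R M]

/-- The Gram determinant `B(x, x) B(y, y) - B(x, y) B(y, x)` of two vectors with respect to a
bilinear form that need be neither symmetric nor positive. Its quotient by `B(x, x)` measures
`y` modulo the line spanned by `x`. -/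
def gramDet (B : LinearMap.BilinForm R M) (x y : M) : R :=
  B x x * B y y - B x y * B y x

lemma gramDet_smul_add_smul_self (B : LinearMap.BilinForm R M) (x y : M) (a b : R) :
    gramDet B x (a • y + b • x) = a ^ 2 * gramDet B x y := by
  simp only [gramDet, map_add, map_smul, LinearMap.add_apply, LinearMap.smul_apply, smul_eq_mul]
  ring

end GramDet

section Gradient

variable {E : Type*} [NormedAddCommGroup E] [InnerProductSpace ℝ E]

lemma hasFDerivAt_norm_of_ne_zero {x : E} (hx : x ≠ 0) :
    HasFDerivAt (fun y : E ↦ ‖y‖) (‖x‖⁻¹ • innerSL ℝ x) x := by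
  have hsq : HasFDerivAt (fun y : E ↦ ‖y‖ ^ 2) (2 • innerSL ℝ x) x :=
    (hasStrictFDerivAt_norm_sq x).hasFDerivAt
  have hsqrt := hsq.sqrt (pow_ne_zero 2 (norm_ne_zero_iff.mpr hx))
  simp only [Real.sqrt_sq (norm_nonneg _)] at hsqrt
  refine hsqrt.congr_fderiv ?_
  module

variable [CompleteSpace E]

lemma hasGradientAt_comp_norm {h : ℝ → ℝ} {h' : ℝ} {x : E} (hx : x ≠ 0)
    (hh : HasDerivAt h h' ‖x‖) :
    HasGradientAt (fun y ↦ h ‖y‖) ((h' * ‖x‖⁻¹) • x) x := by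
  rw [hasGradientAt_iff_hasFDerivAt]
  refine (hh.comp_hasFDerivAt x (hasFDerivAt_norm_of_ne_zero hx)).congr_fderiv ?_
  ext y
  simp [mul_assoc]

lemma hasGradientAt_mul {f g : E → ℝ} {f' g' x : E}
    (hf : HasGradientAt f f' x) (hg : HasGradientAt g g' x) :
    HasGradientAt (fun y ↦ f y * g y) (f x • g' + g x • f') x := by
  rw [hasGradientAt_iff_hasFDerivAt] at hf hg ⊢
  simp only [map_add, map_smulₛₗ, conj_trivial]
  exact hf.mul hg

lemma gramDet_gradient_radial_mul (B : LinearMap.BilinForm ℝ E) {h : ℝ → ℝ} {u : E → ℝ} {x : E}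
    (hx : x ≠ 0) (hh : DifferentiableAt ℝ h ‖x‖) (hu : DifferentiableAt ℝ u x) :
    gramDet B x (gradient (fun y ↦ h ‖y‖ * u y) x) = h ‖x‖ ^ 2 * gramDet B x (gradient u x) := by
  have hv := hasGradientAt_mul (hasGradientAt_comp_norm hx hh.hasDerivAt) hu.hasGradientAt
  rw [hv.gradient, smul_smul, gramDet_smul_add_smul_self]

end Gradient

section CoefficientMatrix

open Matrix

variable {n : ℕ}

/-- The bilinear form `(ξ, η) ↦ ⟨ξ, M η⟩` on `ℝⁿ`; `quadForm M` is this form with its two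
arguments exchanged. -/
def matrixForm (M : Matrix (Fin n) (Fin n) ℝ) : LinearMap.BilinForm ℝ (En n) :=
  toBilin (EuclideanSpace.basisFun (Fin n) ℝ).toBasis M

lemma quadForm_eq_matrixForm (M : Matrix (Fin n) (Fin n) ℝ) (ξ η : En n) :
    quadForm M ξ η = matrixForm M η ξ := by
  simp only [quadForm, matrixForm, toBilin_apply, mulVec, dotProduct, Finset.sum_mul,
    OrthonormalBasis.coe_toBasis_repr_apply, EuclideanSpace.basisFun_repr]
  exact Finset.sum_congr rfl fun i _ ↦ Finset.sum_congr rfl fun j _ ↦ by ring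

lemma quadForm_comm {M : Matrix (Fin n) (Fin n) ℝ} (hM : M.IsSymm) (ξ η : En n) :
    quadForm M ξ η = quadForm M η ξ := by
  have hB : (matrixForm M).IsSymm := (isSymm_toBilin_iff_isSymm _).mpr hM
  rw [quadForm_eq_matrixForm, quadForm_eq_matrixForm, hB.eq]

variable {A : En n → Matrix (Fin n) (Fin n) ℝ} {x : En n}

lemma Zd_eq_quadForm_div_muA (f : En n → ℝ) :
    Zd A f x = quadForm (A x) x (gradient f x) / muA A x := by
  simp only [Zd, Zvec, quadForm, PiLp.smul_apply, smul_eq_mul, Finset.sum_div]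
  exact Finset.sum_congr rfl fun i _ ↦ by ring

lemma ne_zero_of_quadForm_self_ne_zero {M : Matrix (Fin n) (Fin n) ℝ}
    (hx : quadForm M x x ≠ 0) : x ≠ 0 := by
  rintro rfl
  simp [quadForm_eq_matrixForm] at hx

lemma Zd_sq_mul_muA_sub_quadForm_gradient (hA : (A x).IsSymm) (hx : quadForm (A x) x x ≠ 0)
    (f : En n → ℝ) :
    (Zd A f x / ‖x‖) ^ 2 * muA A x - quadForm (A x) (gradient f x) (gradient f x)
      = -gramDet (matrixForm (A x)) x (gradient f x) / quadForm (A x) x x := by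
  have hr : ‖x‖ ≠ 0 := norm_ne_zero_iff.mpr (ne_zero_of_quadForm_self_ne_zero hx)
  simp only [Zd_eq_quadForm_div_muA, muA, gramDet, ← quadForm_eq_matrixForm,
    quadForm_comm hA (gradient f x) x]
  field_simp
  ring

theorem radial_factor_identity_general (hA : (A x).IsSymm) (hx : quadForm (A x) x x ≠ 0)
    {h : ℝ → ℝ} (hh : DifferentiableAt ℝ h ‖x‖) {u : En n → ℝ} (hu : DifferentiableAt ℝ u x) :
    (Zd A (fun y ↦ h ‖y‖ * u y) x / ‖x‖) ^ 2 * muA A x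
        - quadForm (A x) (gradient (fun y ↦ h ‖y‖ * u y) x) (gradient (fun y ↦ h ‖y‖ * u y) x)
      = h ‖x‖ ^ 2 * ((Zd A u x / ‖x‖) ^ 2 * muA A x
          - quadForm (A x) (gradient u x) (gradient u x)) := by
  have hx₀ : x ≠ 0 := ne_zero_of_quadForm_self_ne_zero hx
  simp only [Zd_sq_mul_muA_sub_quadForm_gradient hA hx, gramDet_gradient_radial_mul _ hx₀ hh hu]
  ring

lemma Zd_radial_sq_mul_muA_eq_quadForm_gradient (hA : (A x).IsSymm) (hx : quadForm (A x) x x ≠ 0)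
    {h : ℝ → ℝ} (hh : DifferentiableAt ℝ h ‖x‖) :
    (Zd A (fun y ↦ h ‖y‖) x / ‖x‖) ^ 2 * muA A x
      = quadForm (A x) (gradient (fun y ↦ h ‖y‖) x) (gradient (fun y ↦ h ‖y‖) x) := by
  have hone := radial_factor_identity_general hA hx hh (differentiableAt_const (1 : ℝ))
  simpa [Zd_eq_quadForm_div_muA, quadForm_eq_matrixForm, sub_eq_zero] using hone

lemma quadForm_self_ne_zero_of_le {M : Matrix (Fin n) (Fin n) ℝ} {lam : ℝ} (hlam : 0 < lam)
    (hM : lam * ‖x‖ ^ 2 ≤ quadForm M x x) (hx : x ≠ 0) : quadForm M x x ≠ 0 :=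
  (lt_of_lt_of_le (by positivity) hM).ne'

end CoefficientMatrix

/-- **Lemma `L:rad`.** For `v(x) = h(|x|) u(x)` one has the pointwise
identity `(Zv/r)² μ - ⟨A∇v, ∇v⟩ = h(|x|)² [(Zu/r)² μ - ⟨A∇u, ∇u⟩]` on `Ω`; in
particular every radial function `v(x) = h(|x|)` satisfies `(Zv/r)² μ = ⟨A∇v, ∇v⟩`. -/
theorem radial_factor_identity
    (n : ℕ) (hn : 2 ≤ n)
    (A : En n → Matrix (Fin n) (Fin n) ℝ) (lam : ℝ)
    (hlam0 : 0 < lam) (hlam1 : lam < 1)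
    (hAsymm : ∀ x ∈ OmegaExt n, (A x).IsSymm)
    (hell : ∀ x ∈ OmegaExt n, ∀ ξ : En n,
      lam * ‖ξ‖ ^ 2 ≤ quadForm (A x) ξ ξ ∧ quadForm (A x) ξ ξ ≤ lam⁻¹ * ‖ξ‖ ^ 2)
    (h : ℝ → ℝ) (hh : ∀ t ∈ Set.Ioi (1 : ℝ), DifferentiableAt ℝ h t)
    (u : En n → ℝ) (hu : ∀ x ∈ OmegaExt n, DifferentiableAt ℝ u x) :
    (∀ x ∈ OmegaExt n,
      (Zd A (fun y => h ‖y‖ * u y) x / ‖x‖) ^ 2 * muA A x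
          - quadForm (A x) (gradient (fun y => h ‖y‖ * u y) x)
              (gradient (fun y => h ‖y‖ * u y) x)
        = (h ‖x‖) ^ 2 *
            ((Zd A u x / ‖x‖) ^ 2 * muA A x
              - quadForm (A x) (gradient u x) (gradient u x))) ∧
    (∀ x ∈ OmegaExt n,
      (Zd A (fun y => h ‖y‖) x / ‖x‖) ^ 2 * muA A x
        = quadForm (A x) (gradient (fun y => h ‖y‖) x) (gradient (fun y => h ‖y‖) x)) := by
  have hne : ∀ x ∈ OmegaExt n, quadForm (A x) x x ≠ 0 := fun x hx ↦
    quadForm_self_ne_zero_of_le hlam0 (hell x hx x).1 (norm_pos_iff.mp (one_pos.trans hx))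
  exact ⟨fun x hx ↦ radial_factor_identity_general (hAsymm x hx) (hne x hx) (hh _ hx) (hu x hx),
    fun x hx ↦ Zd_radial_sq_mul_muA_eq_quadForm_gradient (hAsymm x hx) (hne x hx) (hh _ hx)⟩

end
end
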